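/- arXiv:0810.2731 — 4 statements merged into one kernel-verified Lean document; each statement's English description precedes it below -/
import Mathlib

section
/- Fix integers ℓ≥1 and n≥0. There exists a bijection Ψ : G_{ℓ,n} → G_{ℓ,n} such that for every σ ∈ G_{ℓ,n}: Der(Ψ(σ)) = Der(σ), maf Ψ(σ) = maj σ, exc Ψ(σ) = exc σ, fix Ψ(σ) = fix σ and col Ψ(σ) = col σ. In particular fmaf Ψ(σ) = fmaj σ. -/
/-!
The equivalence is built fibre by fibre over the derangement part: it suffices that on each fibre
of `Der` the statistics `maj` and `maf` have the same generating function. A fibre is parametrized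
by the set of fixed places, an arbitrary `k`-subset of the `n` places, and both generating functions
are `q ^ maj (Der σ)` times a Gaussian binomial coefficient. For `maf` this is the distribution of
the sum of the elements of a `k`-subset. For `maj`, the adjacent letters of a word compare in the
same way when excedances are declared larger than fixed points, and fixed points larger than all
other letters. In this order the fixed points may be replaced by copies of one letter, so the word
becomes a shuffle of the word of `Der σ` with a constant word, and the shuffle theorem of Garsia and
Gessel gives the distribution of `maj`.
-/

open Finset

/-- A colored permutation in `G_{ℓ,n} ≅ C_ℓ ≀ S_n`: an underlying permutation of `Fin n`
together with a color (exponent of `ζ`) attached to each position. The letter at (0-based)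
position `i` of the word of `σ` is `ζ^(σ.2 i) · (σ.1 i + 1)` (1-based value `σ.1 i + 1`). -/
abbrev CP (ℓ n : ℕ) := Equiv.Perm (Fin n) × (Fin n → Fin ℓ)

namespace CP

variable {ℓ n : ℕ}

/-- `gtLetter a b` : the letter `a = (colorIndex, value)` is greater than `b` in the order
`1 > ζ > ⋯ > ζ^{ℓ-1}` on colors, colors compared first. -/
def gtLetter (a b : ℕ × ℕ) : Prop := a.1 < b.1 ∨ (a.1 = b.1 ∧ b.2 < a.2)

instance (a b : ℕ × ℕ) : Decidable (gtLetter a b) := by unfold gtLetter; infer_instance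

/-- The letter (color index, 0-based absolute value) at 0-based position `i`. -/
def letter (σ : CP ℓ n) (i : ℕ) : ℕ × ℕ :=
  if h : i < n then ((σ.2 ⟨i, h⟩ : ℕ), (σ.1 ⟨i, h⟩ : ℕ)) else (0, 0)

/-- 0-based descent positions : `i < n-1` such that `x_{i+1} > x_{i+2}` (1-based positions). -/
def desSet (σ : CP ℓ n) : Finset ℕ :=
  (range (n - 1)).filter fun i => gtLetter (letter σ i) (letter σ (i + 1))

/-- Major index: sum of the (1-based) descent places. -/
def maj (σ : CP ℓ n) : ℕ := ∑ i ∈ desSet σ, (i + 1)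

/-- Number of descents. -/
def des (σ : CP ℓ n) : ℕ := (desSet σ).card

/-- `col σ = Σ_j j·#{i : ε_{x_i} = ζ^j}`. -/
def col (σ : CP ℓ n) : ℕ := ∑ i, (σ.2 i : ℕ)

/-- flag major index. -/
def fmaj (σ : CP ℓ n) : ℕ := ℓ * maj σ + col σ

/-- The set of fixed points (position fixed and color `ζ^0 = 1`). -/
def fixSet (σ : CP ℓ n) : Finset (Fin n) :=
  univ.filter fun i => σ.1 i = i ∧ (σ.2 i : ℕ) = 0

def fix (σ : CP ℓ n) : ℕ := (fixSet σ).card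

/-- Number of excedances `x_i > i`. -/
def exc (σ : CP ℓ n) : ℕ :=
  (univ.filter fun i : Fin n => (σ.2 i : ℕ) = 0 ∧ (i : ℕ) < (σ.1 i : ℕ)).card

lemma card_nonfix (σ : CP ℓ n) : ((fixSet σ)ᶜ).card = n - fix σ := by
  rw [Finset.card_compl, fix, Fintype.card_fin]

lemma card_vals (σ : CP ℓ n) : (((fixSet σ)ᶜ).image σ.1).card = n - fix σ := by
  rw [Finset.card_image_of_injective _ σ.1.injective, card_nonfix]

/-- The bijection from nonfixed positions to the set of their values. -/
def derMid (σ : CP ℓ n) :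
    {x // x ∈ ((fixSet σ)ᶜ : Finset (Fin n))} ≃ {x // x ∈ ((fixSet σ)ᶜ).image σ.1} where
  toFun p := ⟨σ.1 p.1, Finset.mem_image_of_mem _ p.2⟩
  invFun v := ⟨σ.1.symm v.1, by
    obtain ⟨p, hp, hpv⟩ := Finset.mem_image.mp v.2
    simpa [← hpv] using hp⟩
  left_inv p := by simp
  right_inv v := by simp

/-- The derangement part `Der σ`: delete the fixed points of the word of `σ`, replace each
absolute value by its rank among the remaining values, and keep the colors. -/
def Der (σ : CP ℓ n) : CP ℓ (n - fix σ) :=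
  let eP := ((fixSet σ)ᶜ).orderIsoOfFin (card_nonfix σ)
  let eV := (((fixSet σ)ᶜ).image σ.1).orderIsoOfFin (card_vals σ)
  (eP.toEquiv.trans ((derMid σ).trans eV.toEquiv.symm), fun i => σ.2 (eP i))

/-- `maf σ = maj (Der σ) + Σ_{j=1}^k (i_j − j)` over the (1-based) fixed points
`i_1 < ⋯ < i_k`; with 0-based fixed positions this is `Σ f − k(k−1)/2`. -/
def maf (σ : CP ℓ n) : ℕ := maj (Der σ) + ((∑ i ∈ fixSet σ, (i : ℕ)) - (fix σ).choose 2)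

/-- flag maf. -/
def fmaf (σ : CP ℓ n) : ℕ := ℓ * maf σ + col σ

end CP

/-- The q-integer `[k]_q = 1 + q + ⋯ + q^{k-1}`. -/
def qint {R : Type*} [CommSemiring R] (q : R) (k : ℕ) : R := ∑ i ∈ range k, q ^ i

/-- Transport a colored permutation along an equality of sizes. -/
def castCP {ℓ a b : ℕ} (h : a = b) (σ : CP ℓ a) : CP ℓ b := h ▸ σ

section GaussBinom

variable {R : Type*} [CommSemiring R]

/-- The Gaussian binomial coefficient `[n choose k]_q`, defined by one of the two `q`-Pascal
rules. -/
def gaussBinom (q : R) : ℕ → ℕ → R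
  | _, 0 => 1
  | 0, _ + 1 => 0
  | n + 1, k + 1 => gaussBinom q n k + q ^ (k + 1) * gaussBinom q n (k + 1)

variable (q : R)

lemma gaussBinom_zero_right (n : ℕ) : gaussBinom q n 0 = 1 := by
  cases n <;> rfl

lemma gaussBinom_succ_succ (n k : ℕ) : gaussBinom q (n + 1) (k + 1) =
    gaussBinom q n k + q ^ (k + 1) * gaussBinom q n (k + 1) := rfl

lemma gaussBinom_eq_zero_of_lt {n k : ℕ} (h : n < k) : gaussBinom q n k = 0 := by
  induction n generalizing k with
  | zero => obtain ⟨k, rfl⟩ := Nat.exists_eq_succ_of_ne_zero h.ne'; rfl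
  | succ n ih =>
    obtain ⟨k, rfl⟩ := Nat.exists_eq_succ_of_ne_zero (Nat.ne_zero_of_lt h)
    rw [gaussBinom_succ_succ, ih (by omega), ih (by omega), mul_zero, add_zero]

lemma gaussBinom_self (n : ℕ) : gaussBinom q n n = 1 := by
  induction n with
  | zero => rfl
  | succ n ih =>
    rw [gaussBinom_succ_succ, ih, gaussBinom_eq_zero_of_lt q n.lt_succ_self, mul_zero, add_zero]

lemma gaussBinom_succ_succ' (n k : ℕ) : gaussBinom q (n + 1) (k + 1) =
    q ^ (n - k) * gaussBinom q n k + gaussBinom q n (k + 1) := by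
  induction n generalizing k with
  | zero => cases k <;> simp [gaussBinom]
  | succ n ih =>
    cases k with
    | zero =>
      have hih : gaussBinom q (n + 1) 1 = q ^ n + gaussBinom q n 1 := by
        simpa only [zero_add, Nat.sub_zero, gaussBinom_zero_right, mul_one] using ih 0
      calc gaussBinom q (n + 2) 1
          = 1 + q ^ 1 * gaussBinom q (n + 1) 1 := by rw [gaussBinom, gaussBinom_zero_right]
        _ = q ^ (n + 1) + (1 + q ^ 1 * gaussBinom q n 1) := by rw [hih]; ring
        _ = q ^ (n + 1) * gaussBinom q (n + 1) 0 + gaussBinom q (n + 1) 1 := by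
            rw [gaussBinom_zero_right, mul_one, gaussBinom, gaussBinom_zero_right]
    | succ k =>
      have hpow : q ^ (k + 2) * (q ^ (n - (k + 1)) * gaussBinom q n (k + 1)) =
          q ^ (n - k) * (q ^ (k + 1) * gaussBinom q n (k + 1)) := by
        rcases lt_or_ge n (k + 1) with hlt | hle
        · simp only [gaussBinom_eq_zero_of_lt q hlt, mul_zero]
        · rw [← mul_assoc, ← mul_assoc, ← pow_add, ← pow_add]
          congr 2
          omega
      calc gaussBinom q (n + 2) (k + 2)
          = gaussBinom q (n + 1) (k + 1) + q ^ (k + 2) * gaussBinom q (n + 1) (k + 2) := rfl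
        _ = q ^ (n - k) * gaussBinom q n k + gaussBinom q n (k + 1) +
              q ^ (k + 2) * (q ^ (n - (k + 1)) * gaussBinom q n (k + 1) +
                gaussBinom q n (k + 2)) := by rw [ih k, ih (k + 1)]
        _ = q ^ (n - k) * (gaussBinom q n k + q ^ (k + 1) * gaussBinom q n (k + 1)) +
              (gaussBinom q n (k + 1) + q ^ (k + 2) * gaussBinom q n (k + 2)) := by
            rw [mul_add, hpow]
            ring
        _ = q ^ (n + 1 - (k + 1)) * gaussBinom q (n + 1) (k + 1) +
              gaussBinom q (n + 1) (k + 2) := by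
            rw [Nat.add_sub_add_right, ← gaussBinom_succ_succ, ← gaussBinom_succ_succ]

end GaussBinom

lemma sum_powersetCard_succ_range_succ {M : Type*} [AddCommMonoid M] (n k : ℕ)
    (f : Finset ℕ → M) :
    ∑ S ∈ powersetCard (k + 1) (range (n + 1)), f S =
      ∑ S ∈ powersetCard (k + 1) (range n), f S +
        ∑ S ∈ powersetCard k (range n), f (insert n S) := by
  have hn : ∀ j, ∀ S ∈ powersetCard j (range n), n ∉ S := fun j S hS hnS =>
    notMem_range_self ((mem_powersetCard.mp hS).1 hnS)
  rw [range_add_one, powersetCard_succ_insert notMem_range_self, sum_union, sum_image]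
  · intro S hS T hT hST
    rw [← erase_insert (hn k S hS), hST, erase_insert (hn k T hT)]
  · refine disjoint_left.mpr fun S hS hS' => ?_
    obtain ⟨T, -, rfl⟩ := mem_image.mp hS'
    exact hn _ _ hS (mem_insert_self n T)

lemma choose_two_card_le_sum (S : Finset ℕ) : S.card.choose 2 ≤ ∑ i ∈ S, i := by
  induction S using Finset.induction_on_max with
  | empty => simp
  | insert a S hlt ih =>
    have ha : a ∉ S := fun h => lt_irrefl a (hlt a h)
    have hcard : S.card ≤ a := by
      simpa using card_le_card fun x hx => mem_range.mpr (hlt x hx)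
    rw [card_insert_of_notMem ha, sum_insert ha, Nat.choose_succ_succ' S.card 1,
      Nat.choose_one_right]
    exact add_le_add hcard ih

lemma sum_pow_sum_sub_choose_two {R : Type*} [CommSemiring R] (q : R) (n k : ℕ) :
    ∑ S ∈ powersetCard k (range n), q ^ (∑ i ∈ S, i - k.choose 2) = gaussBinom q n k := by
  induction n generalizing k with
  | zero =>
    cases k with
    | zero => simp [gaussBinom_zero_right]
    | succ k => rw [range_zero, powersetCard_eq_empty.mpr (by simp), sum_empty,
        gaussBinom_eq_zero_of_lt q k.succ_pos]
  | succ n ih =>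
    cases k with
    | zero => simp [gaussBinom_zero_right]
    | succ k =>
      have hinsert : ∀ S ∈ powersetCard k (range n),
          ∑ i ∈ insert n S, i - (k + 1).choose 2 = n - k + (∑ i ∈ S, i - k.choose 2) := by
        intro S hS
        obtain ⟨hsub, hcard⟩ := mem_powersetCard.mp hS
        have hkn : k ≤ n := by simpa [hcard] using card_le_card hsub
        have hsum := choose_two_card_le_sum S
        rw [hcard] at hsum
        have hchoose : (k + 1).choose 2 = k + k.choose 2 := by
          rw [Nat.choose_succ_succ' k 1, Nat.choose_one_right]
        rw [sum_insert fun h => notMem_range_self (hsub h), hchoose]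
        omega
      rw [sum_powersetCard_succ_range_succ, ih, gaussBinom_succ_succ', ← ih k, mul_sum, add_comm]
      congr 1
      exact sum_congr rfl fun S hS => by rw [hinsert S hS, pow_add]

section Shuffle

variable {α : Type*}

/-- The shuffle of the words `u` and `v` in which the places in `S` carry, in order, the letters
of `v`, and the other places those of `u`. Words are infinite sequences; a shuffle of the prefixes
of lengths `m` and `k` is the prefix of length `m + k` for a `k`-subset `S` of `range (m + k)`. -/
def shuffle (u v : ℕ → α) (S : Finset ℕ) (i : ℕ) : α :=
  if i ∈ S then v (Nat.count (· ∈ S) i) else u (Nat.count (· ∉ S) i)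

variable {u v : ℕ → α} {S T : Finset ℕ} {i m n k : ℕ}

lemma shuffle_congr (h : ∀ j ≤ i, j ∈ S ↔ j ∈ T) : shuffle u v S i = shuffle u v T i := by
  have hlt : ∀ j < i, (j ∈ S ↔ j ∈ T) := fun j hj => h j hj.le
  simp only [shuffle, h i le_rfl, Nat.count_eq_card_filter_range]
  congr 3 <;> exact filter_congr fun j hj => by simp only [hlt j (mem_range.mp hj)]

lemma shuffle_of_subset_range (hS : S ⊆ range n) : shuffle u v S n = u (n - S.card) := by
  have hn : n ∉ S := fun h => notMem_range_self (hS h)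
  rw [shuffle, if_neg hn, Nat.count_eq_card_filter_range, filter_notMem_eq_sdiff,
    card_sdiff_of_subset hS, card_range]

lemma shuffle_insert_of_subset_range (hS : S ⊆ range n) :
    shuffle u v (insert n S) n = v S.card := by
  have hfilter : {i ∈ range n | i ∈ insert n S} = S := by
    ext i
    have := @hS i
    simp only [mem_filter, mem_range, mem_insert] at this ⊢
    grind
  rw [shuffle, if_pos (mem_insert_self n S), Nat.count_eq_card_filter_range, hfilter]

lemma shuffle_range_of_lt (h : i < n) : shuffle u v (range n) i = v i := by
  rw [shuffle, if_pos (mem_range.mpr h), Nat.count_iff_forall.mpr fun j hj =>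
    mem_range.mpr (hj.trans h)]

lemma shuffle_empty : shuffle u v ∅ = u := by
  funext i
  rw [shuffle, if_neg (notMem_empty i), Nat.count_iff_forall.mpr fun j _ => notMem_empty j]

variable [LinearOrder α]

/-- The major index of the word `w 0 ⋯ w (n - 1) c`. -/
def majSnoc (w : ℕ → α) : ℕ → α → ℕ
  | 0, _ => 0
  | n + 1, c => majSnoc w n (w n) + if c < w n then n + 1 else 0

lemma majSnoc_succ (w : ℕ → α) (n : ℕ) (c : α) :
    majSnoc w (n + 1) c = majSnoc w n (w n) + if c < w n then n + 1 else 0 := rfl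

lemma majSnoc_congr {w w' : ℕ → α} (h : ∀ i < n, w i = w' i) (c : α) :
    majSnoc w n c = majSnoc w' n c := by
  induction n generalizing c with
  | zero => rfl
  | succ n ih => rw [majSnoc_succ, majSnoc_succ, h n n.lt_succ_self, ih fun i hi => h i (by omega)]

lemma majSnoc_self (w : ℕ → α) (n : ℕ) :
    majSnoc w n (w n) = ∑ i ∈ range n with w (i + 1) < w i, (i + 1) := by
  induction n with
  | zero => rfl
  | succ n ih => rw [majSnoc_succ, ih, sum_filter, sum_filter, sum_range_succ]

lemma majSnoc_of_forall_le {w : ℕ → α} {c : α} (h : ∀ i < n, w i ≤ c) :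
    majSnoc w n c = ∑ i ∈ range (n - 1) with w (i + 1) < w i, (i + 1) := by
  cases n with
  | zero => rfl
  | succ n => rw [majSnoc_succ, if_neg (h n n.lt_succ_self).not_gt, add_zero, majSnoc_self,
      Nat.add_sub_cancel]

lemma majSnoc_shuffle_of_subset (hS : S ⊆ range n) (c : α) :
    majSnoc (shuffle u v S) (n + 1) c = majSnoc (shuffle u v S) n (u (n - S.card)) +
      if c < u (n - S.card) then n + 1 else 0 := by
  rw [majSnoc_succ, shuffle_of_subset_range hS]

lemma majSnoc_shuffle_insert (hS : S ⊆ range n) (c : α) :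
    majSnoc (shuffle u v (insert n S)) (n + 1) c =
      majSnoc (shuffle u v S) n (v S.card) + if c < v S.card then n + 1 else 0 := by
  have hcongr : ∀ i < n, shuffle u v (insert n S) i = shuffle u v S i := fun i hi =>
    shuffle_congr fun j hj => by simp [(hj.trans_lt hi).ne]
  rw [majSnoc_succ, shuffle_insert_of_subset_range hS, majSnoc_congr hcongr]

variable {R : Type*} [CommSemiring R] (q : R)

/-- The generating function by major index of the words `w c`, for `w` running over the shuffles
of `u 0 ⋯ u (m - 1)` with `v 0 ⋯ v (k - 1)`. -/
def shuffleSum (u v : ℕ → α) (m k : ℕ) (c : α) : R :=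
  ∑ S ∈ powersetCard k (range (m + k)), q ^ majSnoc (shuffle u v S) (m + k) c

lemma shuffleSum_zero_right (c : α) : shuffleSum q u v m 0 c = q ^ majSnoc u m c := by
  simp only [shuffleSum, add_zero, powersetCard_zero, sum_singleton, shuffle_empty]

lemma shuffleSum_zero_left (c : α) : shuffleSum q u v 0 k c = q ^ majSnoc v k c := by
  have hself : powersetCard k (range k) = {range k} := by
    simpa using powersetCard_self (range k)
  rw [shuffleSum, zero_add, hself, sum_singleton, majSnoc_congr fun i hi => shuffle_range_of_lt hi]

lemma shuffleSum_succ_succ (m k : ℕ) (c : α) :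
    shuffleSum q u v (m + 1) (k + 1) c =
      shuffleSum q u v m (k + 1) (u m) * q ^ (if c < u m then m + k + 2 else 0) +
        shuffleSum q u v (m + 1) k (v k) * q ^ (if c < v k then m + k + 2 else 0) := by
  have hlen : m + 1 + (k + 1) = m + (k + 1) + 1 := by omega
  have hlen' : m + 1 + k = m + (k + 1) := by omega
  simp only [shuffleSum, hlen, hlen', sum_powersetCard_succ_range_succ, sum_mul]
  congr 1 <;> refine sum_congr rfl fun S hS => ?_ <;>
    obtain ⟨hsub, hcard⟩ := mem_powersetCard.mp hS
  · rw [majSnoc_shuffle_of_subset hsub, hcard, Nat.add_sub_cancel, pow_add]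
    rfl
  · rw [majSnoc_shuffle_insert hsub, hcard, pow_add]
    rfl

/-- The recursion step of the shuffle theorem: `a` and `b` are the last letters of the two words,
and `hxy` and `hxy'` stand for the two `q`-Pascal rules. -/
lemma pow_ite_mul_add_pow_ite_mul {a b : α} (hab : a ≠ b) (c : α) {x y z : R} {m k : ℕ}
    (hxy : z = q ^ k * x + y) (hxy' : z = x + q ^ m * y) :
    q ^ (if a < b then k else 0) * x * q ^ (if c < a then m + k else 0) +
      q ^ (if b < a then m else 0) * y * q ^ (if c < b then m + k else 0) =
    q ^ (if c < a then m else 0) * q ^ (if c < b then k else 0) * z := by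
  rcases hab.lt_or_gt with h | h
  · by_cases ha : c < a
    · simp only [h, h.not_gt, ha, ha.trans h, if_true, if_false, hxy]
      ring
    · by_cases hb : c < b <;> simp only [h, h.not_gt, ha, hb, if_true, if_false]
      · rw [hxy']
        ring
      · rw [hxy]
        ring
  · by_cases hb : c < b
    · simp only [h, h.not_gt, hb, hb.trans h, if_true, if_false, hxy']
      ring
    · by_cases ha : c < a <;> simp only [h, h.not_gt, ha, hb, if_true, if_false]
      · rw [hxy]
        ring
      · rw [hxy']
        ring

/-- The shuffle theorem of Garsia and Gessel for words followed by a common letter `c`. The letter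
makes the induction close: what precedes the last letter of a shuffle is again a shuffle, followed
by that letter. -/
theorem shuffleSum_eq (c : α) (huv : ∀ i < m, ∀ j < k, u i ≠ v j) :
    shuffleSum q u v m k c =
      q ^ (majSnoc u m c + majSnoc v k c) * gaussBinom q (m + k) k := by
  induction m generalizing k c with
  | zero => simp only [shuffleSum_zero_left, majSnoc, zero_add, gaussBinom_self, mul_one]
  | succ m ihm =>
    induction k generalizing c with
    | zero =>
      simp only [shuffleSum_zero_right, majSnoc, add_zero, gaussBinom_zero_right, mul_one]
    | succ k ihk =>
      have hab : u m ≠ v k := huv m m.lt_succ_self k k.lt_succ_self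
      have hPascal : gaussBinom q (m + k + 2) (k + 1) =
          q ^ (k + 1) * gaussBinom q (m + k + 1) (k + 1) + gaussBinom q (m + k + 1) k := by
        rw [gaussBinom_succ_succ, add_comm]
      have hPascal' : gaussBinom q (m + k + 2) (k + 1) =
          gaussBinom q (m + k + 1) (k + 1) + q ^ (m + 1) * gaussBinom q (m + k + 1) k := by
        rw [gaussBinom_succ_succ', add_comm, show m + k + 1 - k = m + 1 by omega]
      have hu : shuffleSum q u v m (k + 1) (u m) = q ^ (majSnoc u m (u m) + majSnoc v k (v k)) *
          (q ^ (if u m < v k then k + 1 else 0) * gaussBinom q (m + k + 1) (k + 1)) := by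
        rw [ihm _ fun i hi j hj => huv i (by omega) j hj, majSnoc_succ, ← add_assoc (majSnoc u _ _),
          pow_add, mul_assoc, ← add_assoc m]
      have hv : shuffleSum q u v (m + 1) k (v k) = q ^ (majSnoc u m (u m) + majSnoc v k (v k)) *
          (q ^ (if v k < u m then m + 1 else 0) * gaussBinom q (m + k + 1) k) := by
        rw [ihk _ fun i hi j hj => huv i hi j (by omega), majSnoc_succ, add_right_comm,
          pow_add, mul_assoc, add_right_comm m]
      have hlast := pow_ite_mul_add_pow_ite_mul q hab c hPascal hPascal'
      have hlen : m + 1 + (k + 1) = m + k + 2 := by omega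
      rw [hlen] at hlast ⊢
      rw [shuffleSum_succ_succ, hu, hv, mul_assoc (q ^ (_ + _)), mul_assoc (q ^ (_ + _)), ← mul_add,
        hlast, majSnoc_succ, majSnoc_succ, add_add_add_comm, pow_add q (_ + _),
        pow_add q (ite _ _ _), ← mul_assoc]

end Shuffle

lemma count_orderEmb {m n : ℕ} (e : Fin m ↪o Fin n) {p : ℕ → Prop} [DecidablePred p]
    (hp : ∀ i : Fin n, p i ↔ i ∈ Set.range e) (j : Fin m) : Nat.count p (e j) = j := by
  have hmap : {i ∈ range (e j) | p i} =
      (Iio j).map (e.toEmbedding.trans Fin.valEmbedding) := by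
    ext i
    simp only [mem_filter, mem_range, mem_map, mem_Iio, Function.Embedding.trans_apply,
      Fin.valEmbedding_apply, RelEmbedding.coe_toEmbedding]
    constructor
    · rintro ⟨hij, hi⟩
      obtain ⟨a, ha⟩ := (hp ⟨i, hij.trans (e j).2⟩).mp hi
      have hai : (e a : ℕ) = i := congrArg Fin.val ha
      exact ⟨a, e.lt_iff_lt.mp (Fin.lt_def.mpr (hai ▸ hij)), hai⟩
    · rintro ⟨a, haj, rfl⟩
      exact ⟨e.lt_iff_lt.mpr haj, (hp _).mpr (Set.mem_range_self a)⟩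
  rw [Nat.count_eq_card_filter_range, hmap, card_map, Fin.card_Iio]

open Polynomial in
lemma exists_equiv_of_sum_X_pow_eq {α β : Type*} [Fintype α] [DecidableEq β] {d : α → β}
    {f g : α → ℕ}
    (h : ∀ a₀, ∑ a with d a = d a₀, (X : ℕ[X]) ^ f a = ∑ a with d a = d a₀, X ^ g a) :
    ∃ Ψ : α ≃ α, ∀ a, d (Ψ a) = d a ∧ g (Ψ a) = f a := by
  classical
  have hcard : ∀ b c, #{a | d a = b ∧ f a = c} = #{a | d a = b ∧ g a = c} := by
    intro b c
    by_cases hb : ∃ a₀, d a₀ = b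
    · obtain ⟨a₀, rfl⟩ := hb
      have hcoeff := congrArg (coeff · c) (h a₀)
      simpa only [finsetSum_coeff, coeff_X_pow, eq_comm (a := c), sum_boole, filter_filter,
        Nat.cast_id] using hcoeff
    · rw [filter_false_of_mem fun a _ ha => hb ⟨a, ha.1⟩,
        filter_false_of_mem fun a _ ha => hb ⟨a, ha.1⟩]
  have hfiber : ∀ bc : β × ℕ, Nonempty ({a // (d a, f a) = bc} ≃ {a // (d a, g a) = bc}) :=
    fun bc => ⟨Fintype.equivOfCardEq <| by
      simpa only [Fintype.card_subtype, Prod.ext_iff] using hcard bc.1 bc.2⟩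
  exact ⟨Equiv.ofFiberEquiv fun bc => (hfiber bc).some, fun a =>
    Prod.ext_iff.mp (Equiv.ofFiberEquiv_map (fun bc => (hfiber bc).some) a)⟩

namespace CP

variable {ℓ m n : ℕ} {σ : CP ℓ n} {i : ℕ}

lemma mem_fixSet {i : Fin n} : i ∈ fixSet σ ↔ σ.1 i = i ∧ (σ.2 i : ℕ) = 0 := by
  simp only [fixSet, mem_filter, mem_univ, true_and]

lemma fix_le (σ : CP ℓ n) : fix σ ≤ n := card_finset_fin_le _

lemma letter_coe (σ : CP ℓ n) (i : Fin n) : letter σ i = ((σ.2 i : ℕ), (σ.1 i : ℕ)) :=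
  dif_pos i.2

section Der

/-- The places of the letters of `Der σ` in the word of `σ`. -/
def nonfixEmb (σ : CP ℓ n) : Fin (n - fix σ) ↪o Fin n :=
  ((fixSet σ)ᶜ).orderEmbOfFin (card_nonfix σ)

lemma mem_range_nonfixEmb {i : Fin n} : i ∈ Set.range (nonfixEmb σ) ↔ i ∉ fixSet σ := by
  rw [nonfixEmb, range_orderEmbOfFin, mem_coe, mem_compl]

lemma nonfixEmb_notMem (σ : CP ℓ n) (j : Fin (n - fix σ)) : nonfixEmb σ j ∉ fixSet σ :=
  mem_range_nonfixEmb.mp (Set.mem_range_self j)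

lemma image_compl_fixSet (σ : CP ℓ n) : ((fixSet σ)ᶜ).image σ.1 = (fixSet σ)ᶜ := by
  refine eq_of_subset_of_card_le (image_subset_iff.mpr fun i hi => ?_)
    (card_image_of_injective _ σ.1.injective).ge
  simp only [mem_compl, mem_fixSet, σ.1.injective.eq_iff] at hi ⊢
  rintro ⟨hσi, hcol⟩
  exact hi ⟨hσi, hσi ▸ hcol⟩

lemma nonfixEmb_Der_fst (σ : CP ℓ n) (j : Fin (n - fix σ)) :
    nonfixEmb σ ((Der σ).1 j) = σ.1 (nonfixEmb σ j) := by
  have hsymm : ∀ (V : Finset (Fin n)) (_ : V = (fixSet σ)ᶜ) (hV : V.card = n - fix σ) (v : V),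
      nonfixEmb σ ((V.orderIsoOfFin hV).symm v) = v := by
    rintro V rfl hV v
    exact congrArg Subtype.val ((((fixSet σ)ᶜ).orderIsoOfFin hV).apply_symm_apply v)
  exact hsymm _ (image_compl_fixSet σ) (card_vals σ) _

lemma Der_snd (σ : CP ℓ n) (j : Fin (n - fix σ)) : (Der σ).2 j = σ.2 (nonfixEmb σ j) := rfl

lemma fixSet_Der (σ : CP ℓ n) : fixSet (Der σ) = ∅ := by
  refine eq_empty_of_forall_notMem fun j hj => nonfixEmb_notMem σ j ?_
  rw [mem_fixSet, Der_snd] at hj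
  exact mem_fixSet.mpr ⟨by rw [← nonfixEmb_Der_fst, hj.1], hj.2⟩

lemma exc_Der (σ : CP ℓ n) : exc (Der σ) = exc σ := by
  have hmap : ({i : Fin n | (σ.2 i : ℕ) = 0 ∧ (i : ℕ) < (σ.1 i : ℕ)} : Finset (Fin n)) =
      ({j | ((Der σ).2 j : ℕ) = 0 ∧ (j : ℕ) < ((Der σ).1 j : ℕ)} : Finset _).map
        (nonfixEmb σ).toEmbedding := by
    ext i
    simp only [mem_filter, mem_univ, true_and, mem_map, RelEmbedding.coe_toEmbedding, Der_snd,
      Fin.val_fin_lt]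
    constructor
    · rintro ⟨hcol, hlt⟩
      obtain ⟨j, rfl⟩ : i ∈ Set.range (nonfixEmb σ) :=
        mem_range_nonfixEmb.mpr fun hi => hlt.ne' (mem_fixSet.mp hi).1
      rw [← nonfixEmb_Der_fst, OrderEmbedding.lt_iff_lt] at hlt
      exact ⟨j, ⟨hcol, hlt⟩, rfl⟩
    · rintro ⟨j, ⟨hcol, hlt⟩, rfl⟩
      exact ⟨hcol, by rwa [← nonfixEmb_Der_fst, OrderEmbedding.lt_iff_lt]⟩
  rw [exc, exc, hmap, card_map]

lemma col_Der (σ : CP ℓ n) : col (Der σ) = col σ := by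
  refine (sum_map univ (nonfixEmb σ).toEmbedding fun i => (σ.2 i : ℕ)).symm.trans ?_
  refine sum_subset (subset_univ _) fun i _ hi => (mem_fixSet.mp ?_).2
  by_contra hfix
  obtain ⟨j, rfl⟩ := mem_range_nonfixEmb.mpr hfix
  exact hi (mem_map_of_mem _ (mem_univ j))

/-- The derangement part bundled with its size, so that derangement parts of different colored
permutations can be compared. -/
def sigmaDer (σ : CP ℓ n) : Σ m, CP ℓ m := ⟨n - fix σ, Der σ⟩

lemma sigmaDer_eq_mk {τ : CP ℓ m} (e : Fin m ↪o Fin n)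
    (hfix : ∀ i, i ∈ fixSet σ ↔ i ∉ Set.range e) (hfst : ∀ j, σ.1 (e j) = e (τ.1 j))
    (hsnd : ∀ j, σ.2 (e j) = τ.2 j) : sigmaDer σ = ⟨m, τ⟩ := by
  have hmem : ∀ j, e j ∈ (fixSet σ)ᶜ := fun j =>
    mem_compl.mpr fun h => (hfix _).mp h (Set.mem_range_self j)
  have hcompl : (fixSet σ)ᶜ = univ.map e.toEmbedding := by
    ext i
    simp only [mem_compl, hfix, not_not, Set.mem_range, mem_map, mem_univ, true_and,
      RelEmbedding.coe_toEmbedding]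
  have hsize : n - fix σ = m := by rw [← card_nonfix, hcompl, card_map, card_fin]
  subst hsize
  obtain rfl : e = nonfixEmb σ := orderEmbOfFin_unique' (card_nonfix σ) hmem
  have hDer : Der σ = τ := by
    refine Prod.ext (Equiv.ext fun j => (nonfixEmb σ).injective ?_) (funext hsnd)
    rw [nonfixEmb_Der_fst, hfst]
  rw [sigmaDer, hDer]

lemma fix_eq_of_sigmaDer_eq {ρ : CP ℓ n} (h : sigmaDer σ = sigmaDer ρ) : fix σ = fix ρ := by
  have hsize : n - fix σ = n - fix ρ := congrArg Sigma.fst h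
  have := fix_le σ
  have := fix_le ρ
  omega

lemma exc_eq_of_sigmaDer_eq {ρ : CP ℓ n} (h : sigmaDer σ = sigmaDer ρ) : exc σ = exc ρ := by
  rw [← exc_Der σ, ← exc_Der ρ]
  exact congrArg (fun d : Σ m, CP ℓ m => exc d.2) h

lemma col_eq_of_sigmaDer_eq {ρ : CP ℓ n} (h : sigmaDer σ = sigmaDer ρ) : col σ = col ρ := by
  rw [← col_Der σ, ← col_Der ρ]
  exact congrArg (fun d : Σ m, CP ℓ m => col d.2) h

lemma maj_Der_eq_of_sigmaDer_eq {ρ : CP ℓ n} (h : sigmaDer σ = sigmaDer ρ) :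
    maj (Der σ) = maj (Der ρ) := by
  change maj (sigmaDer σ).2 = maj (sigmaDer ρ).2
  rw [h]

lemma exists_castCP_eq {p q : Σ m, CP ℓ m} (h : p = q) : ∃ h : p.1 = q.1, castCP h p.2 = q.2 := by
  subst h
  exact ⟨rfl, rfl⟩

end Der

section InsertFixed

variable [NeZero ℓ]

/-- The colored permutation whose letters at the places in the range of `e` standardize to `τ` and
whose other places are fixed points. -/
noncomputable def insertFixed (e : Fin m ↪o Fin n) (τ : CP ℓ m) : CP ℓ n :=
  (τ.1.viaEmbedding e.toEmbedding, Function.extend e τ.2 0)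

variable {e : Fin m ↪o Fin n} {τ : CP ℓ m}

lemma insertFixed_fst_apply (j : Fin m) : (insertFixed e τ).1 (e j) = e (τ.1 j) :=
  Equiv.Perm.viaEmbedding_apply τ.1 e.toEmbedding j

lemma insertFixed_snd_apply (j : Fin m) : (insertFixed e τ).2 (e j) = τ.2 j :=
  e.injective.extend_apply _ _ j

lemma insertFixed_fst_of_notMem {i : Fin n} (hi : i ∉ Set.range e) :
    (insertFixed e τ).1 i = i :=
  Equiv.Perm.viaEmbedding_apply_of_notMem τ.1 e.toEmbedding i hi

lemma insertFixed_snd_of_notMem {i : Fin n} (hi : i ∉ Set.range e) :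
    (insertFixed e τ).2 i = 0 :=
  Function.extend_apply' _ _ i hi

lemma mem_fixSet_insertFixed (hτ : fixSet τ = ∅) {i : Fin n} :
    i ∈ fixSet (insertFixed e τ) ↔ i ∉ Set.range e := by
  constructor
  · rintro hi ⟨j, rfl⟩
    rw [mem_fixSet, insertFixed_fst_apply, insertFixed_snd_apply, e.injective.eq_iff,
      ← mem_fixSet, hτ] at hi
    exact notMem_empty j hi
  · intro hi
    rw [mem_fixSet, insertFixed_fst_of_notMem hi, insertFixed_snd_of_notMem hi, Fin.val_zero]
    exact ⟨rfl, rfl⟩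

lemma insertFixed_nonfixEmb (σ : CP ℓ n) : insertFixed (nonfixEmb σ) (Der σ) = σ := by
  have hcases : ∀ i, (insertFixed (nonfixEmb σ) (Der σ)).1 i = σ.1 i ∧
      (insertFixed (nonfixEmb σ) (Der σ)).2 i = σ.2 i := by
    intro i
    by_cases hi : i ∈ Set.range (nonfixEmb σ)
    · obtain ⟨j, rfl⟩ := hi
      rw [insertFixed_fst_apply, insertFixed_snd_apply, nonfixEmb_Der_fst, Der_snd]
      exact ⟨rfl, rfl⟩
    · obtain ⟨hfst, hsnd⟩ := mem_fixSet.mp (not_not.mp (mt mem_range_nonfixEmb.mpr hi))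
      rw [insertFixed_fst_of_notMem hi, insertFixed_snd_of_notMem hi, hfst]
      exact ⟨rfl, Fin.ext hsnd.symm⟩
  exact Prod.ext (Equiv.ext fun i => (hcases i).1) (funext fun i => (hcases i).2)

lemma insertFixed_of_eq {S : Finset (Fin n)} {d : Σ m, CP ℓ m} (hS : S = fixSet σ)
    (hd : d = sigmaDer σ) (h : #Sᶜ = d.1) : insertFixed (Sᶜ.orderEmbOfFin h) d.2 = σ := by
  subst hS hd
  exact insertFixed_nonfixEmb σ

lemma eq_of_fixSet_eq_of_sigmaDer_eq {ρ : CP ℓ n} (hS : fixSet σ = fixSet ρ)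
    (hd : sigmaDer σ = sigmaDer ρ) : σ = ρ :=
  (insertFixed_of_eq hS.symm hd.symm (card_nonfix ρ)).symm.trans <| insertFixed_nonfixEmb ρ

lemma sigmaDer_insertFixed (hτ : fixSet τ = ∅) : sigmaDer (insertFixed e τ) = ⟨m, τ⟩ :=
  sigmaDer_eq_mk e (fun _ => mem_fixSet_insertFixed hτ) (fun _ => insertFixed_fst_apply _)
    fun _ => insertFixed_snd_apply _

end InsertFixed

section Maj

/-- The class of the letter at place `i`: `2` for excedances, `1` for fixed points, and minus the
color index for all other letters. -/
def markClass (σ : CP ℓ n) (i : ℕ) : ℤ :=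
  if (letter σ i).1 = 0 ∧ i < (letter σ i).2 then 2
  else if (letter σ i).1 = 0 ∧ (letter σ i).2 = i then 1
  else -(letter σ i).1

/-- The letter at place `i`, ordered by class first and by absolute value second. This is not the
order of the colored letters, but adjacent letters of one word compare alike in both. -/
def mark (σ : CP ℓ n) (i : ℕ) : ℤ ×ₗ ℕ := toLex (markClass σ i, (letter σ i).2)

/-- A letter of the class of fixed points, inserted for all of them in `shuffledMark`. -/
def fixMark : ℤ ×ₗ ℕ := toLex (1, 0)

/-- A letter above all marks, appended to a word of marks without creating a descent. -/
def topMark : ℤ ×ₗ ℕ := toLex (3, 0)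

lemma mark_coe (σ : CP ℓ n) (i : Fin n) : mark σ i = toLex (markClass σ i, (σ.1 i : ℕ)) := by
  rw [mark, letter_coe]

lemma mark_lt_mark_iff (hi : i + 1 < n) :
    mark σ (i + 1) < mark σ i ↔ gtLetter (letter σ i) (letter σ (i + 1)) := by
  have hne : (letter σ i).2 ≠ (letter σ (i + 1)).2 := by
    rw [letter_coe σ ⟨i, by omega⟩, letter_coe σ ⟨i + 1, hi⟩]
    simp [Fin.val_inj]
  simp only [mark, markClass, gtLetter, Prod.Lex.toLex_lt_toLex]
  split_ifs <;> omega

lemma mark_le (σ : CP ℓ n) (i : ℕ) : mark σ i ≤ topMark := by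
  refine (Prod.Lex.toLex_lt_toLex.mpr (Or.inl ?_)).le
  dsimp only [markClass]
  split_ifs <;> omega

lemma fixMark_le_topMark : fixMark ≤ topMark :=
  (Prod.Lex.toLex_lt_toLex.mpr (Or.inl (by norm_num))).le

lemma maj_eq_majSnoc_mark (σ : CP ℓ n) : maj σ = majSnoc (mark σ) n topMark := by
  rw [majSnoc_of_forall_le fun i _ => mark_le σ i, maj, desSet]
  refine sum_congr (filter_congr fun i hi => (mark_lt_mark_iff ?_).symm) fun _ _ => rfl
  have := mem_range.mp hi
  omega

/-- The fixed points of `σ` as a set of places in `range n`. -/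
def fixPlaces (σ : CP ℓ n) : Finset ℕ := (fixSet σ).map Fin.valEmbedding

lemma coe_mem_fixPlaces {i : Fin n} : (i : ℕ) ∈ fixPlaces σ ↔ i ∈ fixSet σ :=
  mem_map' Fin.valEmbedding

lemma mark_of_mem_fixSet {i : Fin n} (hi : i ∈ fixSet σ) : mark σ i = toLex (1, (i : ℕ)) := by
  obtain ⟨hfst, hsnd⟩ := mem_fixSet.mp hi
  simp only [mark, markClass, letter_coe, hfst, hsnd, lt_irrefl, and_false, and_self, if_true,
    if_false]

lemma mark_nonfixEmb (σ : CP ℓ n) (j : Fin (n - fix σ)) : mark σ (nonfixEmb σ j) =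
    toLex (markClass (Der σ) j, (nonfixEmb σ ((Der σ).1 j) : ℕ)) := by
  simp only [mark, markClass, letter_coe, ← nonfixEmb_Der_fst, Der_snd, Fin.val_fin_lt,
    OrderEmbedding.lt_iff_lt, Fin.val_inj, EmbeddingLike.apply_eq_iff_eq]

lemma markClass_Der_ne_one (σ : CP ℓ n) (j : Fin (n - fix σ)) : markClass (Der σ) j ≠ 1 := by
  have hj : j ∉ fixSet (Der σ) := by
    rw [fixSet_Der]
    exact notMem_empty j
  rw [mem_fixSet, Fin.ext_iff] at hj
  rw [markClass, letter_coe]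
  split_ifs <;> omega

/-- The word of marks of `Der σ` with `fixMark` inserted at all fixed points of `σ`. -/
def shuffledMark (σ : CP ℓ n) : ℕ → ℤ ×ₗ ℕ :=
  shuffle (mark (Der σ)) (fun _ => fixMark) (fixPlaces σ)

lemma shuffledMark_of_mem_fixSet {i : Fin n} (hi : i ∈ fixSet σ) :
    shuffledMark σ i = fixMark := if_pos (coe_mem_fixPlaces.mpr hi)

lemma shuffledMark_nonfixEmb (σ : CP ℓ n) (j : Fin (n - fix σ)) :
    shuffledMark σ (nonfixEmb σ j) = toLex (markClass (Der σ) j, ((Der σ).1 j : ℕ)) := by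
  have hp : ∀ i : Fin n, (i : ℕ) ∉ fixPlaces σ ↔ i ∈ Set.range (nonfixEmb σ) := fun i => by
    rw [coe_mem_fixPlaces, mem_range_nonfixEmb]
  rw [shuffledMark, shuffle, if_neg ((hp _).mpr (Set.mem_range_self j)), count_orderEmb _ hp,
    mark_coe]

lemma shuffledMark_lt_iff (hi : i + 1 < n) :
    shuffledMark σ (i + 1) < shuffledMark σ i ↔ mark σ (i + 1) < mark σ i := by
  obtain ⟨a, rfl⟩ : ∃ a : Fin n, (a : ℕ) = i := ⟨⟨i, by omega⟩, rfl⟩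
  obtain ⟨b, hb⟩ : ∃ b : Fin n, (b : ℕ) = a + 1 := ⟨⟨a + 1, hi⟩, rfl⟩
  have hcases : ∀ c : Fin n, c ∈ fixSet σ ∨ ∃ j, nonfixEmb σ j = c := fun c => by
    rw [or_iff_not_imp_left]
    exact mem_range_nonfixEmb.mpr
  rw [← hb]
  rcases hcases a with ha | ⟨j, rfl⟩ <;> rcases hcases b with hb' | ⟨k, rfl⟩
  · rw [shuffledMark_of_mem_fixSet ha, shuffledMark_of_mem_fixSet hb', mark_of_mem_fixSet ha,
      mark_of_mem_fixSet hb']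
    simp only [fixMark, Prod.Lex.toLex_lt_toLex]
    omega
  · have := markClass_Der_ne_one σ k
    rw [shuffledMark_of_mem_fixSet ha, shuffledMark_nonfixEmb, mark_of_mem_fixSet ha,
      mark_nonfixEmb]
    simp only [fixMark, Prod.Lex.toLex_lt_toLex]
    omega
  · have := markClass_Der_ne_one σ j
    rw [shuffledMark_nonfixEmb, shuffledMark_of_mem_fixSet hb', mark_nonfixEmb,
      mark_of_mem_fixSet hb']
    simp only [fixMark, Prod.Lex.toLex_lt_toLex]
    omega
  · simp only [shuffledMark_nonfixEmb, mark_nonfixEmb, Prod.Lex.toLex_lt_toLex, Fin.val_fin_lt,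
      OrderEmbedding.lt_iff_lt]

lemma shuffledMark_le (σ : CP ℓ n) (i : ℕ) : shuffledMark σ i ≤ topMark := by
  rw [shuffledMark, shuffle]
  split_ifs
  · exact fixMark_le_topMark
  · exact mark_le _ _

lemma maj_eq_majSnoc_shuffledMark (σ : CP ℓ n) :
    maj σ = majSnoc (shuffledMark σ) n topMark := by
  rw [maj_eq_majSnoc_mark, majSnoc_of_forall_le fun i _ => mark_le σ i,
    majSnoc_of_forall_le fun i _ => shuffledMark_le σ i]
  refine sum_congr (filter_congr fun i hi => (shuffledMark_lt_iff ?_).symm) fun _ _ => rfl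
  have := mem_range.mp hi
  omega

end Maj

section Fiber

lemma card_fixPlaces (σ : CP ℓ n) : #(fixPlaces σ) = fix σ := card_map _

lemma fixPlaces_mem_powersetCard (σ : CP ℓ n) :
    fixPlaces σ ∈ powersetCard (fix σ) (range n) :=
  mem_powersetCard.mpr ⟨fun i hi => by
    obtain ⟨a, -, rfl⟩ := mem_map.mp hi
    exact mem_range.mpr a.2, card_fixPlaces σ⟩

lemma exists_sigmaDer_eq_fixPlaces_eq [NeZero ℓ] (σ : CP ℓ n) {S : Finset ℕ}
    (hS : S ∈ powersetCard (fix σ) (range n)) :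
    ∃ ρ : CP ℓ n, sigmaDer ρ = sigmaDer σ ∧ fixPlaces ρ = S := by
  obtain ⟨hsub, hcard⟩ := mem_powersetCard.mp hS
  let T : Finset (Fin n) := S.attachFin fun i hi => mem_range.mp (hsub hi)
  have hT : #Tᶜ = n - fix σ := by rw [card_compl, Fintype.card_fin, card_attachFin, hcard]
  refine ⟨insertFixed (Tᶜ.orderEmbOfFin hT) (Der σ), sigmaDer_insertFixed (fixSet_Der σ), ?_⟩
  have hfix : fixSet (insertFixed (Tᶜ.orderEmbOfFin hT) (Der σ)) = T := by
    ext i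
    rw [mem_fixSet_insertFixed (fixSet_Der σ), range_orderEmbOfFin, mem_coe, mem_compl, not_not]
  rw [fixPlaces, hfix, map_valEmbedding_attachFin]

lemma sum_sigmaDer_eq_comp_fixPlaces [NeZero ℓ] {M : Type*} [AddCommMonoid M] (σ : CP ℓ n)
    (f : Finset ℕ → M) :
    ∑ ρ : CP ℓ n with sigmaDer ρ = sigmaDer σ, f (fixPlaces ρ) =
      ∑ S ∈ powersetCard (fix σ) (range n), f S := by
  refine sum_nbij fixPlaces (fun ρ hρ => ?_) (fun ρ hρ ρ' hρ' h => ?_) (fun S hS => ?_)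
    fun _ _ => rfl
  · rw [← fix_eq_of_sigmaDer_eq (mem_filter.mp hρ).2]
    exact fixPlaces_mem_powersetCard ρ
  · exact eq_of_fixSet_eq_of_sigmaDer_eq (map_injective _ h)
      ((mem_filter.mp hρ).2.trans (mem_filter.mp hρ').2.symm)
  · obtain ⟨ρ, hρ, rfl⟩ := exists_sigmaDer_eq_fixPlaces_eq σ hS
    exact ⟨ρ, mem_filter.mpr ⟨mem_univ ρ, hρ⟩, rfl⟩

variable {R : Type*} [CommSemiring R]

lemma sum_pow_maf_of_sigmaDer_eq [NeZero ℓ] (q : R) (σ : CP ℓ n) :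
    ∑ ρ : CP ℓ n with sigmaDer ρ = sigmaDer σ, q ^ maf ρ =
      q ^ maj (Der σ) * gaussBinom q n (fix σ) := by
  rw [← sum_pow_sum_sub_choose_two, mul_sum, ← sum_sigmaDer_eq_comp_fixPlaces]
  refine sum_congr rfl fun ρ hρ => ?_
  have hDer := (mem_filter.mp hρ).2
  have hsum : ∑ i ∈ fixPlaces ρ, i = ∑ i ∈ fixSet ρ, (i : ℕ) := sum_map _ _ _
  rw [maf, maj_Der_eq_of_sigmaDer_eq hDer, fix_eq_of_sigmaDer_eq hDer, hsum, pow_add]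

lemma sum_pow_maj_of_sigmaDer_eq [NeZero ℓ] (q : R) (σ : CP ℓ n) :
    ∑ ρ : CP ℓ n with sigmaDer ρ = sigmaDer σ, q ^ maj ρ =
      q ^ maj (Der σ) * gaussBinom q n (fix σ) := by
  have hn : n - fix σ + fix σ = n := Nat.sub_add_cancel (fix_le σ)
  have hconst : majSnoc (fun _ => fixMark) (fix σ) topMark = 0 := by
    rw [majSnoc_of_forall_le fun _ _ => fixMark_le_topMark]
    simp only [lt_irrefl, filter_false, sum_empty]
  have hne : ∀ i < n - fix σ, ∀ j < fix σ, mark (Der σ) i ≠ fixMark := fun i hi _ _ h =>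
    markClass_Der_ne_one σ ⟨i, hi⟩ (congrArg (fun x => (ofLex x).1) h)
  have hshuffle := shuffleSum_eq q topMark hne
  rw [hconst, add_zero, ← maj_eq_majSnoc_mark, shuffleSum, hn,
    ← sum_sigmaDer_eq_comp_fixPlaces] at hshuffle
  rw [← hshuffle]
  refine sum_congr rfl fun ρ hρ => ?_
  have hmark : mark (Der ρ) = mark (Der σ) :=
    congrArg (fun d : Σ m, CP ℓ m => mark d.2) (mem_filter.mp hρ).2
  rw [maj_eq_majSnoc_shuffledMark, shuffledMark, hmark]

end Fiber

end CP

/-- There is a bijection `Ψ` of `G_{ℓ,n}` preserving the derangement part,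
`exc`, `fix` and `col`, and transforming `maj` into `maf`; in particular it transforms
`fmaj` into `fmaf`. -/
theorem exists_bijection_maf_maj (ℓ n : ℕ) (hℓ : 1 ≤ ℓ) :
    ∃ Ψ : CP ℓ n ≃ CP ℓ n, ∀ σ : CP ℓ n,
      (∃ h : n - CP.fix (Ψ σ) = n - CP.fix σ, castCP h (CP.Der (Ψ σ)) = CP.Der σ) ∧
      CP.maf (Ψ σ) = CP.maj σ ∧
      CP.exc (Ψ σ) = CP.exc σ ∧
      CP.fix (Ψ σ) = CP.fix σ ∧
      CP.col (Ψ σ) = CP.col σ ∧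
      CP.fmaf (Ψ σ) = CP.fmaj σ := by
  have : NeZero ℓ := ⟨by omega⟩
  obtain ⟨Ψ, hΨ⟩ := exists_equiv_of_sum_X_pow_eq fun σ : CP ℓ n =>
    (CP.sum_pow_maj_of_sigmaDer_eq Polynomial.X σ).trans
      (CP.sum_pow_maf_of_sigmaDer_eq Polynomial.X σ).symm
  refine ⟨Ψ, fun σ => ?_⟩
  obtain ⟨hDer, hmaf⟩ := hΨ σ
  have hcol := CP.col_eq_of_sigmaDer_eq hDer
  exact ⟨CP.exists_castCP_eq hDer, hmaf, CP.exc_eq_of_sigmaDer_eq hDer,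
    CP.fix_eq_of_sigmaDer_eq hDer, hcol, by rw [CP.fmaf, CP.fmaj, hmaf, hcol]⟩
end

section
/- Let ℓ≥1, n≥0 and let σ ∈ D_{ℓ,n} be a colored derangement. For each slot i with 0≤i≤n, the major index of the colored permutation ⟨σ,i⟩ obtained by inserting the fixed point i+1 into the i-th slot satisfies maj⟨σ,i⟩ = maj σ + g_i, where g_i is the value of the i-th slot of σ. -/
/-!
Put a letter `⊥` below all others in front of the word of `σ` and a letter `⊤` above all others
behind it, and number the places from `0`; then neither the first place nor the last one before `⊤`
is a descent. Inserting a letter `y` between consecutive letters `u` and `v` changes `des` by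
`r = [u > y] + [y > v] - [u > v]`, which is `0` or `1`, and moves the later descents one place to
the right. So inserting a fixed point in slot `i` changes `maj` by
`i * r i + [y > v] + #{descents at places > i}`.

Let `e j` be `1` if the letter at place `j` is larger than `j`, and `0` otherwise. Inserting in
slot `i` gives `[u > y] = e i` and, because `σ` has no fixed point, `[y > v] = 1 - e (i + 1)`.
Hence `1 - r j`, the indicator that slot `j` is green, is
`e (j + 1) - e j + [descent at place j]`, and its sum over `j > i` telescopes: there are
`[y > v] + #{descents at places > i}` green slots to the right of slot `i`. So `maj` changes by
`i * r i` plus the number of these slots. At a green slot this is the value of the slot; at a red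
one it is too, because the `i` slots to the left are either green or red.
-/

open Finset

section Insertion

variable {ℓ n N : ℕ}

/-- Extend a colored permutation to `Fin N` by making every element of `F` a fixed point
(with color `1 = ζ^0`), the action on the complement of `F` being that of `σ` transported
along the increasing bijection. -/
def extFix [NeZero ℓ] (F : Finset (Fin N)) (σ : CP ℓ n) (h : Fᶜ.card = n) : CP ℓ N :=
  let e : Fin n ≃o {x // x ∈ (Fᶜ : Finset (Fin N))} := Fᶜ.orderIsoOfFin h
  (σ.1.extendDomain e.toEquiv,
   fun q => if hq : q ∈ (Fᶜ : Finset (Fin N)) then σ.2 (e.symm ⟨q, hq⟩) else 0)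

/-- Insertion `⟨σ,i⟩` of the fixed point `i+1` into the `i`-th slot of a colored
derangement `σ` (0 ≤ i ≤ n): the new letter `i+1` is put at (1-based) position `i+1` and all
absolute values `> i` are shifted by one. -/
def insDer [NeZero ℓ] (σ : CP ℓ n) (i : ℕ) : CP ℓ (n + 1) :=
  extFix {(⟨min i n, by omega⟩ : Fin (n + 1))} σ
    (by simp [Finset.card_compl])


/-- The `i`-th slot of `σ` is green if inserting a fixed point there does not change the
number of descents (otherwise it is red). -/
def isGreen [NeZero ℓ] (σ : CP ℓ n) (i : ℕ) : Prop := CP.des (insDer σ i) = CP.des σ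

instance [NeZero ℓ] (σ : CP ℓ n) (i : ℕ) : Decidable (isGreen σ i) := by
  unfold isGreen; infer_instance

/-- The value `g_i` of the `i`-th slot (0 ≤ i ≤ n) of `σ`: green slots receive the values
`0,…,g` from right to left, red slots the values `g+1,…,n` from left to right. -/
def slotVal [NeZero ℓ] (σ : CP ℓ n) (i : ℕ) : ℕ :=
  if isGreen σ i then ((Finset.range (n + 1)).filter fun j => i < j ∧ isGreen σ j).card
  else ((Finset.range (n + 1)).filter fun j => isGreen σ j).card +
    ((Finset.range (n + 1)).filter fun j => j < i ∧ ¬ isGreen σ j).card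

end Insertion

section InsertLetter

variable {α : Type*}

/-- The word `w 0, …, w i, y, w (i + 1), …`. -/
def insertLetter (w : ℕ → α) (i : ℕ) (y : α) (j : ℕ) : α :=
  if j ≤ i then w j else if j = i + 1 then y else w (j - 1)

variable (w : ℕ → α) (y : α) {i j : ℕ}

lemma insertLetter_of_le (hj : j ≤ i) : insertLetter w i y j = w j := if_pos hj

lemma insertLetter_add_one_self : insertLetter w i y (i + 1) = y := by
  simp [insertLetter]

lemma insertLetter_add_one_of_lt (hj : i < j) : insertLetter w i y (j + 1) = w j := by
  simp [insertLetter, show ¬ j + 1 ≤ i by omega, hj.ne']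

lemma insertLetter_succAbove {n : ℕ} (p : Fin (n + 1)) (q : Fin n) :
    insertLetter w p y (p.succAbove q + 1) = w (q + 1) := by
  rcases q.castSucc.lt_or_ge p with hq | hq
  · rw [Fin.succAbove_of_castSucc_lt p q hq, Fin.val_castSucc]
    exact insertLetter_of_le w y hq
  · rw [Fin.succAbove_of_le_castSucc p q hq, Fin.val_succ]
    exact insertLetter_add_one_of_lt w y (Nat.lt_succ_of_le hq)

end InsertLetter

section Descents

variable {α β : Type*} [LinearOrder α] [LinearOrder β]

/-- The indicator `[u > v]` of a descent between two consecutive letters `u` and `v`. -/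
def descentInd (u v : α) : ℤ := if v < u then 1 else 0

lemma descentInd_map {φ : α → β} (hφ : StrictMono φ) (u v : α) :
    descentInd (φ u) (φ v) = descentInd u v := by
  simp only [descentInd, hφ.lt_iff_lt]

/-- The change in the number of descents caused by inserting the letter `y` between the
consecutive letters `u` and `v`. -/
def descentGain (u y v : α) : ℤ := descentInd u y + descentInd y v - descentInd u v

lemma descentGain_eq_zero_or_one (u y v : α) : descentGain u y v = 0 ∨ descentGain u y v = 1 := by
  unfold descentGain descentInd
  split_ifs <;> grind

/-- The sum of `f j` over the places `j < n` such that `w j > w (j + 1)`. The number of descents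
is the case `f = 1`, the major index of a word numbered from `1` the case `f j = j`. -/
def descentSum (w : ℕ → α) (n : ℕ) (f : ℕ → ℤ) : ℤ :=
  ∑ j ∈ range n, f j * descentInd (w j) (w (j + 1))

lemma descentSum_insertLetter (w : ℕ → α) (y : α) (f : ℕ → ℤ) {i n : ℕ} (hi : i ≤ n) :
    descentSum (insertLetter w i y) (n + 2) f =
      descentSum w (n + 1) f + f i * descentGain (w i) y (w (i + 1)) +
        (f (i + 1) - f i) * descentInd y (w (i + 1)) +
        ∑ j ∈ Ico (i + 1) (n + 1), (f (j + 1) - f j) * descentInd (w j) (w (j + 1)) := by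
  unfold descentSum
  induction n, hi using Nat.le_induction with
  | base =>
    have hleft : ∀ j ∈ range i, f j * descentInd (insertLetter w i y j)
        (insertLetter w i y (j + 1)) = f j * descentInd (w j) (w (j + 1)) := fun j hj => by
      have hj := mem_range.1 hj
      rw [insertLetter_of_le w y hj.le, insertLetter_of_le w y hj]
    rw [sum_range_succ, sum_range_succ, sum_congr rfl hleft, sum_range_succ, Ico_self, sum_empty,
      insertLetter_of_le w y le_rfl, insertLetter_add_one_self,
      insertLetter_add_one_of_lt w y i.lt_add_one, descentGain]
    ring
  | succ n hi ih =>
    rw [sum_range_succ, ih, insertLetter_add_one_of_lt w y (Nat.lt_succ_of_le hi),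
      insertLetter_add_one_of_lt w y (Nat.lt_add_right 1 (Nat.lt_succ_of_le hi)),
      sum_range_succ _ (n + 1), sum_Ico_succ_top (Nat.succ_le_succ hi)]
    ring

end Descents

lemma card_filter_add_card_filter_lt_and_not (p : ℕ → Prop) [DecidablePred p] {i n : ℕ} (hi : i ≤ n)
    (hp : ¬ p i) :
    #{j ∈ range n | p j} + #{j ∈ range n | j < i ∧ ¬ p j} = i + #{j ∈ range n | i < j ∧ p j} := by
  have hlt : #{j ∈ range n | j < i} = i := by
    rw [range_eq_Ico, Ico_filter_lt, min_eq_right hi, Nat.card_Ico, Nat.sub_zero]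
  suffices h : #{j ∈ range n | p j} + #{j ∈ range n | j < i ∧ ¬ p j} =
      #{j ∈ range n | j < i} + #{j ∈ range n | i < j ∧ p j} by rw [h, hlt]
  simp only [card_filter, ← sum_add_distrib]
  refine sum_congr rfl fun j _ => ?_
  rcases lt_trichotomy j i with h | rfl | h
  · by_cases hj : p j <;> simp [hj, h, h.not_gt]
  · simp [hp]
  · simp [h, h.not_gt]

lemma eq_zero_or_eq_fin_succ_or_lt (n j : ℕ) : j = 0 ∨ (∃ q : Fin n, j = q + 1) ∨ n < j := by
  rcases j with _ | j
  · exact .inl rfl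
  · exact .inr ((lt_or_ge j n).imp (fun h => ⟨⟨j, h⟩, rfl⟩) Nat.lt_succ_of_le)

namespace CP

variable {ℓ n : ℕ}

section Letters

/-- The letters `ζ ^ c * v`, ordered as in `Σ_{ℓ,n}`, together with a smallest letter `⊥` and a
largest letter `⊤`. The order dual is there because `1 > ζ > ⋯ > ζ ^ (ℓ - 1)`. -/
abbrev PaddedLetter := WithBot (WithTop (ℕᵒᵈ ×ₗ ℕ))

/-- The letter `ζ ^ c * v` with `1`-based absolute value `v`. -/
def coloredLetter (c v : ℕ) : PaddedLetter :=
  ((toLex (OrderDual.toDual c, v) : ℕᵒᵈ ×ₗ ℕ) : WithTop (ℕᵒᵈ ×ₗ ℕ))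

lemma bot_lt_coloredLetter (c v : ℕ) : ⊥ < coloredLetter c v := WithBot.bot_lt_coe _

lemma coloredLetter_lt_top (c v : ℕ) : coloredLetter c v < ⊤ :=
  WithBot.coe_lt_coe.2 (WithTop.coe_lt_top _)

lemma coloredLetter_lt_coloredLetter {c v c' v' : ℕ} :
    coloredLetter c v < coloredLetter c' v' ↔ c' < c ∨ c = c' ∧ v < v' := by
  simp [coloredLetter, Prod.Lex.toLex_lt_toLex]

lemma coloredLetter_inj {c v c' v' : ℕ} :
    coloredLetter c v = coloredLetter c' v' ↔ c = c' ∧ v = v' := by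
  simp [coloredLetter]

lemma eq_bot_or_eq_top_or_eq_coloredLetter (x : PaddedLetter) :
    x = ⊥ ∨ x = ⊤ ∨ ∃ c v, x = coloredLetter c v := by
  rcases x with _ | _ | ⟨c, v⟩
  exacts [.inl rfl, .inr (.inl rfl), .inr (.inr ⟨c, v, rfl⟩)]

/-- The letter `x'` obtained from `x` when a fixed point is inserted in slot `i`: absolute values
greater than `i` are raised by one. -/
def shiftLetter (i : ℕ) : PaddedLetter → PaddedLetter :=
  WithBot.map <| WithTop.map fun x =>
    toLex ((ofLex x).1, if (ofLex x).2 ≤ i then (ofLex x).2 else (ofLex x).2 + 1)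

lemma shiftLetter_bot (i : ℕ) : shiftLetter i ⊥ = ⊥ := rfl

lemma shiftLetter_top (i : ℕ) : shiftLetter i ⊤ = ⊤ := rfl

lemma shiftLetter_coloredLetter (i c v : ℕ) :
    shiftLetter i (coloredLetter c v) = coloredLetter c (if v ≤ i then v else v + 1) := rfl

lemma shiftLetter_strictMono (i : ℕ) : StrictMono (shiftLetter i) := by
  refine StrictMono.withBot_map (StrictMono.withTop_map fun x y hxy => ?_)
  rw [Prod.Lex.lt_iff] at hxy ⊢
  refine hxy.imp id fun ⟨hc, hv⟩ => ⟨hc, ?_⟩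
  dsimp only [ofLex_toLex]
  split_ifs <;> omega

lemma coloredLetter_lt_shiftLetter {c i : ℕ} {x : PaddedLetter} :
    coloredLetter c (i + 1) < shiftLetter i x ↔ coloredLetter c i < x := by
  obtain rfl | rfl | ⟨c', v, rfl⟩ := eq_bot_or_eq_top_or_eq_coloredLetter x
  · simp only [shiftLetter_bot, not_lt_bot]
  · simp only [shiftLetter_top, coloredLetter_lt_top]
  · rw [shiftLetter_coloredLetter, coloredLetter_lt_coloredLetter, coloredLetter_lt_coloredLetter]
    grind

lemma shiftLetter_lt_coloredLetter {c i : ℕ} {x : PaddedLetter} :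
    shiftLetter i x < coloredLetter c (i + 1) ↔ x < coloredLetter c (i + 1) := by
  obtain rfl | rfl | ⟨c', v, rfl⟩ := eq_bot_or_eq_top_or_eq_coloredLetter x
  · rw [shiftLetter_bot]
  · rw [shiftLetter_top]
  · rw [shiftLetter_coloredLetter, coloredLetter_lt_coloredLetter, coloredLetter_lt_coloredLetter]
    grind

lemma descentInd_coloredLetter_shiftLetter (c i : ℕ) (x : PaddedLetter) :
    descentInd (coloredLetter c (i + 1)) (shiftLetter i x) =
      descentInd (coloredLetter c (i + 1)) x := by
  simp only [descentInd, shiftLetter_lt_coloredLetter]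

lemma descentInd_shiftLetter_coloredLetter (c i : ℕ) (x : PaddedLetter) :
    descentInd (shiftLetter i x) (coloredLetter c (i + 1)) = descentInd x (coloredLetter c i) := by
  simp only [descentInd, coloredLetter_lt_shiftLetter]

end Letters

section PaddedWord

/-- The word of `σ` at the places `1, …, n`, with `⊥` at place `0` and `⊤` at all later places. -/
def paddedWord (σ : CP ℓ n) : ℕ → PaddedLetter
  | 0 => ⊥
  | j + 1 => if h : j < n then coloredLetter (σ.2 ⟨j, h⟩) (σ.1 ⟨j, h⟩ + 1) else ⊤

variable (σ : CP ℓ n)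

lemma paddedWord_fin_succ (q : Fin n) :
    paddedWord σ (q + 1) = coloredLetter (σ.2 q) (σ.1 q + 1) := dif_pos q.2

lemma paddedWord_of_lt {j : ℕ} (hj : n < j) : paddedWord σ j = ⊤ := by
  obtain ⟨j, rfl⟩ := Nat.exists_eq_add_one_of_ne_zero (Nat.ne_zero_of_lt hj)
  exact dif_neg (by omega)

lemma gtLetter_letter_iff {j k : ℕ} (hj : j < n) (hk : k < n) :
    gtLetter (letter σ j) (letter σ k) ↔ paddedWord σ (k + 1) < paddedWord σ (j + 1) := by
  simp only [gtLetter, letter, paddedWord, hj, hk, dif_pos, coloredLetter_lt_coloredLetter,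
    Nat.add_lt_add_iff_right, eq_comm]

lemma desSet_eq_filter_paddedWord :
    desSet σ = {j ∈ range n | paddedWord σ (j + 2) < paddedWord σ (j + 1)} := by
  ext j
  simp only [desSet, mem_filter, mem_range]
  by_cases hj : j + 1 < n
  · rw [gtLetter_letter_iff σ (Nat.lt_of_succ_lt hj) hj]
    simp only [Nat.lt_sub_of_add_lt hj, Nat.lt_of_succ_lt hj]
  · simp only [paddedWord_of_lt σ (show n < j + 2 by omega), not_top_lt, and_false, iff_false]
    omega

lemma sum_desSet (f : ℕ → ℤ) :
    ∑ j ∈ desSet σ, f (j + 1) = descentSum (paddedWord σ) (n + 1) f := by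
  have hzero : descentInd (paddedWord σ 0) (paddedWord σ 1) = 0 := if_neg not_lt_bot
  rw [desSet_eq_filter_paddedWord, sum_filter, descentSum, sum_range_succ', hzero]
  simp only [descentInd, mul_ite, mul_one, mul_zero, add_zero]

lemma des_eq_descentSum : (des σ : ℤ) = descentSum (paddedWord σ) (n + 1) 1 := by
  simp [← sum_desSet, des]

lemma maj_eq_descentSum : (maj σ : ℤ) = descentSum (paddedWord σ) (n + 1) (fun j => j) := by
  simp [← sum_desSet σ (fun j => (j : ℤ)), maj]

end PaddedWord

section Insertion

variable [NeZero ℓ]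

lemma extFix_singleton_self (p : Fin (n + 1)) (σ : CP ℓ n) (h : ({p} : Finset _)ᶜ.card = n) :
    (extFix {p} σ h).1 p = p ∧ (extFix {p} σ h).2 p = 0 :=
  ⟨Equiv.Perm.extendDomain_apply_not_subtype _ _ (by simp), dif_neg (by simp)⟩

lemma extFix_singleton_succAbove (p : Fin (n + 1)) (σ : CP ℓ n)
    (h : ({p} : Finset _)ᶜ.card = n) (q : Fin n) :
    (extFix {p} σ h).1 (p.succAbove q) = p.succAbove (σ.1 q) ∧
      (extFix {p} σ h).2 (p.succAbove q) = σ.2 q := by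
  set e := ({p}ᶜ : Finset (Fin (n + 1))).orderIsoOfFin h
  have he (r : Fin n) : (e r : Fin (n + 1)) = p.succAbove r := by
    rw [Finset.coe_orderIsoOfFin_apply, Finset.orderEmbOfFin_compl_singleton_apply]
    rfl
  constructor
  · have himage := Equiv.Perm.extendDomain_apply_image σ.1 e.toEquiv q
    rw [RelIso.coe_fn_toEquiv, he, he] at himage
    exact himage
  · have hq : p.succAbove q ∈ ({p}ᶜ : Finset (Fin (n + 1))) := by simp [Fin.succAbove_ne]
    have hsymm : e.symm ⟨p.succAbove q, hq⟩ = q :=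
      (OrderIso.symm_apply_eq e).2 (Subtype.ext (he q).symm)
    exact (dif_pos hq).trans (congrArg σ.2 hsymm)

lemma insDer_val (p : Fin (n + 1)) (σ : CP ℓ n) :
    insDer σ p = extFix {p} σ (by simp [Finset.card_compl]) := by
  have hp : (⟨min p n, by omega⟩ : Fin (n + 1)) = p := Fin.ext (min_eq_left (by omega))
  unfold insDer
  rw! [hp]
  rfl

lemma shiftLetter_coloredLetter_succAbove (p : Fin (n + 1)) (c : ℕ) (v : Fin n) :
    shiftLetter p (coloredLetter c (v + 1)) = coloredLetter c (p.succAbove v + 1) := by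
  rw [shiftLetter_coloredLetter]
  rcases lt_or_ge (v : ℕ) p with hv | hv
  · rw [Fin.succAbove_of_castSucc_lt p v hv, Fin.val_castSucc, if_pos (Nat.succ_le_of_lt hv)]
  · rw [Fin.succAbove_of_le_castSucc p v hv, Fin.val_succ,
      if_neg (Nat.lt_succ_of_le hv).not_ge]

lemma paddedWord_insDer (σ : CP ℓ n) {i : ℕ} (hi : i ≤ n) :
    paddedWord (insDer σ i) =
      insertLetter (shiftLetter i ∘ paddedWord σ) i (coloredLetter 0 (i + 1)) := by
  lift i to Fin (n + 1) using Nat.lt_succ_of_le hi with p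
  funext j
  obtain rfl | ⟨q, rfl⟩ | hj := eq_zero_or_eq_fin_succ_or_lt (n + 1) j
  · rw [insertLetter_of_le _ _ p.val.zero_le]
    rfl
  · rw [paddedWord_fin_succ, insDer_val]
    obtain rfl | ⟨q, rfl⟩ := p.eq_self_or_eq_succAbove q
    · obtain ⟨hval, hcol⟩ := extFix_singleton_self q σ (by simp [Finset.card_compl])
      rw [hval, hcol, insertLetter_add_one_self, Fin.val_zero]
    · obtain ⟨hval, hcol⟩ := extFix_singleton_succAbove p σ (by simp [Finset.card_compl]) q
      rw [hval, hcol, insertLetter_succAbove, Function.comp_apply, paddedWord_fin_succ,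
        shiftLetter_coloredLetter_succAbove]
  · obtain ⟨j, rfl⟩ := Nat.exists_eq_add_one_of_ne_zero (Nat.ne_zero_of_lt hj)
    rw [paddedWord_of_lt _ hj, insertLetter_add_one_of_lt _ _ (by omega), Function.comp_apply,
      paddedWord_of_lt _ (Nat.lt_of_succ_lt_succ hj), shiftLetter_top]

/-- The change in the number of descents of `σ` when a fixed point is inserted in slot `i`. -/
def slotGain (σ : CP ℓ n) (i : ℕ) : ℤ :=
  descentGain (shiftLetter i (paddedWord σ i)) (coloredLetter 0 (i + 1))
    (shiftLetter i (paddedWord σ (i + 1)))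

lemma descentSum_paddedWord_insDer (σ : CP ℓ n) (f : ℕ → ℤ) {i : ℕ} (hi : i ≤ n) :
    descentSum (paddedWord (insDer σ i)) (n + 2) f =
      descentSum (paddedWord σ) (n + 1) f + f i * slotGain σ i +
        (f (i + 1) - f i) * descentInd (coloredLetter 0 (i + 1)) (paddedWord σ (i + 1)) +
        ∑ j ∈ Ico (i + 1) (n + 1),
          (f (j + 1) - f j) * descentInd (paddedWord σ j) (paddedWord σ (j + 1)) := by
  rw [paddedWord_insDer σ hi, descentSum_insertLetter _ _ _ hi]
  simp only [descentSum, Function.comp_apply, descentInd_map (shiftLetter_strictMono i), slotGain,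
    descentInd_coloredLetter_shiftLetter]

lemma des_insDer (σ : CP ℓ n) {i : ℕ} (hi : i ≤ n) :
    (des (insDer σ i) : ℤ) = des σ + slotGain σ i := by
  simp [des_eq_descentSum, descentSum_paddedWord_insDer σ _ hi]

lemma maj_insDer (σ : CP ℓ n) {i : ℕ} (hi : i ≤ n) :
    (maj (insDer σ i) : ℤ) = maj σ + i * slotGain σ i +
      (descentInd (coloredLetter 0 (i + 1)) (paddedWord σ (i + 1)) +
        ∑ j ∈ Ico (i + 1) (n + 1), descentInd (paddedWord σ j) (paddedWord σ (j + 1))) := by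
  simp [maj_eq_descentSum, descentSum_paddedWord_insDer σ _ hi, add_assoc]

lemma isGreen_iff_slotGain_eq_zero (σ : CP ℓ n) {i : ℕ} (hi : i ≤ n) :
    isGreen σ i ↔ slotGain σ i = 0 := by
  rw [isGreen, ← Nat.cast_inj (R := ℤ), des_insDer σ hi, add_eq_left]

lemma slotGain_eq_ite (σ : CP ℓ n) {i : ℕ} (hi : i ≤ n) :
    slotGain σ i = if isGreen σ i then 0 else 1 := by
  simp only [isGreen_iff_slotGain_eq_zero σ hi]
  split_ifs with h
  · exact h
  · exact (descentGain_eq_zero_or_one _ _ _).resolve_left h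

lemma card_isGreen_right (σ : CP ℓ n) (i : ℕ) :
    (#{j ∈ range (n + 1) | i < j ∧ isGreen σ j} : ℤ) =
      ∑ j ∈ Ico (i + 1) (n + 1), (1 - slotGain σ j) := by
  have hfilter : {j ∈ range (n + 1) | i < j ∧ isGreen σ j} =
      {j ∈ Ico (i + 1) (n + 1) | isGreen σ j} := by
    ext j
    simp only [mem_filter, mem_range, mem_Ico]
    grind
  rw [hfilter, card_filter, Nat.cast_sum]
  refine sum_congr rfl fun j hj => ?_
  rw [slotGain_eq_ite σ (Nat.le_of_lt_succ (mem_Ico.1 hj).2)]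
  split_ifs <;> rfl

lemma slotVal_eq (σ : CP ℓ n) {i : ℕ} (hi : i ≤ n) :
    (slotVal σ i : ℤ) = i * slotGain σ i + ∑ j ∈ Ico (i + 1) (n + 1), (1 - slotGain σ j) := by
  rw [slotVal, slotGain_eq_ite σ hi, ← card_isGreen_right]
  split_ifs with hg
  · rw [mul_zero, zero_add]
  · rw [card_filter_add_card_filter_lt_and_not _ (Nat.le_succ_of_le hi) hg, Nat.cast_add, mul_one]

end Insertion

section Derangement

/-- The indicator of an excedance at place `j` of the padded word of `σ`: the letter there is
larger than a fixed point at that place. So place `0` is no excedance, and the places after the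
word are excedances. -/
def excedanceInd (σ : CP ℓ n) (j : ℕ) : ℤ := descentInd (paddedWord σ j) (coloredLetter 0 j)

lemma excedanceInd_of_lt (σ : CP ℓ n) {j : ℕ} (hj : n < j) : excedanceInd σ j = 1 := by
  rw [excedanceInd, paddedWord_of_lt σ hj]
  exact if_pos (coloredLetter_lt_top 0 j)

variable {σ : CP ℓ n}

lemma paddedWord_ne_coloredLetter_zero (hσ : fix σ = 0) (j : ℕ) :
    paddedWord σ j ≠ coloredLetter 0 j := by
  obtain rfl | ⟨q, rfl⟩ | hj := eq_zero_or_eq_fin_succ_or_lt n j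
  · exact (bot_lt_coloredLetter 0 0).ne
  · rw [paddedWord_fin_succ, ne_eq, coloredLetter_inj, Nat.add_right_cancel_iff]
    rintro ⟨hcol, hval⟩
    have hq : q ∈ fixSet σ := mem_filter.2 ⟨mem_univ q, Fin.ext hval, hcol⟩
    exact notMem_empty q (card_eq_zero.1 hσ ▸ hq)
  · rw [paddedWord_of_lt σ hj]
    exact (coloredLetter_lt_top 0 j).ne'

lemma descentInd_coloredLetter_paddedWord (hσ : fix σ = 0) (j : ℕ) :
    descentInd (coloredLetter 0 j) (paddedWord σ j) = 1 - excedanceInd σ j := by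
  unfold excedanceInd descentInd
  rcases lt_or_gt_of_ne (paddedWord_ne_coloredLetter_zero hσ j) with h | h
  · rw [if_pos h, if_neg h.not_gt, sub_zero]
  · rw [if_neg h.not_gt, if_pos h, sub_self]

lemma one_sub_slotGain (hσ : fix σ = 0) (i : ℕ) :
    1 - slotGain σ i = excedanceInd σ (i + 1) - excedanceInd σ i +
      descentInd (paddedWord σ i) (paddedWord σ (i + 1)) := by
  rw [slotGain, descentGain, descentInd_shiftLetter_coloredLetter,
    descentInd_coloredLetter_shiftLetter, descentInd_coloredLetter_paddedWord hσ,
    descentInd_map (shiftLetter_strictMono i), excedanceInd, excedanceInd]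
  ring

lemma sum_one_sub_slotGain (hσ : fix σ = 0) {i : ℕ} (hi : i ≤ n) :
    ∑ j ∈ Ico (i + 1) (n + 1), (1 - slotGain σ j) =
      descentInd (coloredLetter 0 (i + 1)) (paddedWord σ (i + 1)) +
        ∑ j ∈ Ico (i + 1) (n + 1), descentInd (paddedWord σ j) (paddedWord σ (j + 1)) := by
  simp only [one_sub_slotGain hσ, sum_add_distrib]
  rw [sum_Ico_sub _ (Nat.succ_le_succ hi), excedanceInd_of_lt σ n.lt_add_one,
    descentInd_coloredLetter_paddedWord hσ]

end Derangement

end CP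

/-- For a colored derangement `σ ∈ D_{ℓ,n}` and a slot `0 ≤ i ≤ n`,
`maj ⟨σ,i⟩ = maj σ + g_i` where `g_i` is the value of the `i`-th slot. -/
theorem maj_insert_eq_maj_add_slotVal (ℓ n : ℕ) [NeZero ℓ] (σ : CP ℓ n)
    (hσ : CP.fix σ = 0) (i : ℕ) (hi : i ≤ n) :
    CP.maj (insDer σ i) = CP.maj σ + slotVal σ i := by
  zify
  rw [CP.maj_insDer σ hi, CP.slotVal_eq σ hi, CP.sum_one_sub_slotGain hσ hi, add_assoc]
end

section
/- Let σ = x_1 x_2 ⋯ x_n ∈ S_n with the conventions x_0 = x_{n+1} = +∞, let (i,i+1) be the j-th slot of σ, let t_i = des(x_{i+1}⋯x_n), and let d_j be the number of descent places of ⟨σ,j⟩ that are ≥ i+1 (the descents of ⟨σ,j⟩ to the right of the inserted letter). Then d_j = t_i if (x_i > x_{i+1} > i) or (x_i < i < x_{i+1}) or (i < x_i < x_{i+1}), and d_j = t_i + 1 if (i > x_i > x_{i+1}) or (x_i > i ≥ x_{i+1}) or (x_i < x_{i+1} ≤ i). -/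
open Finset

/-- The word of `σ ∈ S_n` with the conventions `x_0 = x_{n+1} = +∞`: `wordInf σ p` is the
(1-based) letter `x_p` for `1 ≤ p ≤ n`, and `+∞` otherwise. -/
def wordInf {n : ℕ} (σ : Equiv.Perm (Fin n)) (p : ℕ) : ℕ∞ :=
  if h : 1 ≤ p ∧ p ≤ n then (((σ ⟨p - 1, by omega⟩ : Fin n) : ℕ) + 1 : ℕ) else ⊤

/-- The shift `x ↦ x'` used when inserting the fixed point `i+1`:
`x' = x` if `x ≤ i`, `x' = x+1` if `x > i`. -/
def shiftInf (i : ℕ) (v : ℕ∞) : ℕ∞ := if v ≤ (i : ℕ∞) then v else v + 1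

/-- The word of `⟨σ,j⟩ ∈ S_{n+1}`, the permutation obtained by inserting the fixed point
`i+1` into the `j`-th slot `(i,i+1)` of `σ`:
`⟨σ,j⟩ = x_1' ⋯ x_i' (i+1) x_{i+1}' ⋯ x_n'` (again with `+∞` outside `[1,n+1]`). -/
def insWordInf {n : ℕ} (σ : Equiv.Perm (Fin n)) (i : ℕ) (p : ℕ) : ℕ∞ :=
  if p < i + 1 then shiftInf i (wordInf σ p)
  else if p = i + 1 then ((i + 1 : ℕ) : ℕ∞)
  else shiftInf i (wordInf σ (p - 1))

/-!
The place `i + 1` of the inserted letter is a descent exactly when `x_{i+1}' < i + 1`, that is, when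
`x_{i+1} ≤ i`. Every later place compares `x_p'` with `x_{p+1}'`, and `x ↦ x'` is strictly
increasing, so these places contribute exactly `t_i` descents. Hence `d_j` is `t_i + 1` if
`x_{i+1} ≤ i` and `t_i` otherwise, and each case of the theorem decides which of the two holds.
-/

section DescentCount

variable {α β : Type*}

/-- The number of descent places `p` of the word `w` with `a ≤ p ≤ b`. The place `p` compares `w p`
with `w (p + 1)`, so `des(w_a ⋯ w_c)` is `descentCount w a (c - 1)` for `c ≥ 1`. -/
def descentCount [LT α] [DecidableLT α] (w : ℕ → α) (a b : ℕ) : ℕ :=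
  #{p ∈ Icc a b | w (p + 1) < w p}

theorem descentCount_of_lt [LT α] [DecidableLT α] (w : ℕ → α) {a b : ℕ} (h : b < a) :
    descentCount w a b = 0 := by
  rw [descentCount, Icc_eq_empty_of_lt h, filter_empty, card_empty]

theorem descentCount_eq_add_ite [LT α] [DecidableLT α] (w : ℕ → α) {a b : ℕ} (h : a ≤ b) :
    descentCount w a b = descentCount w (a + 1) b + if w (a + 1) < w a then 1 else 0 := by
  simp only [descentCount, card_filter]
  rw [← add_sum_Ioc_eq_sum_Icc h, Icc_add_one_left_eq_Ioc, add_comm]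

theorem descentCount_add_one_of_strictMono [LinearOrder α] [Preorder β] [DecidableLT β]
    {f : α → β} (hf : StrictMono f) {v : ℕ → β} {w : ℕ → α} {a b : ℕ}
    (hv : ∀ p, a ≤ p → v (p + 1) = f (w p)) :
    descentCount v (a + 1) (b + 1) = descentCount w a b := by
  rw [descentCount, ← map_add_right_Icc, filter_map, card_map, descentCount]
  congr 1
  refine filter_congr fun p hp ↦ ?_
  have hap : a ≤ p := (mem_Icc.1 hp).1
  simp only [Function.comp_apply, addRightEmbedding_apply]
  rw [hv p hap, hv (p + 1) (hap.trans p.le_succ), hf.lt_iff_lt]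

end DescentCount

theorem shiftInf_strictMono (i : ℕ) : StrictMono (shiftInf i) := by
  intro a b hab
  unfold shiftInf
  split_ifs with ha hb hb
  · exact hab
  · exact hab.trans_le le_self_add
  · exact absurd (hab.le.trans hb) ha
  · exact (ENat.add_lt_add_iff_right ENat.one_ne_top).2 hab

theorem shiftInf_lt_add_one_iff {i : ℕ} {v : ℕ∞} :
    shiftInf i v < ((i + 1 : ℕ) : ℕ∞) ↔ v ≤ i := by
  unfold shiftInf
  split_ifs with h
  · exact iff_of_true (h.trans_lt (by exact_mod_cast i.lt_succ_self)) h
  · refine iff_of_false (not_lt.2 ?_) h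
    push_cast
    gcongr
    exact (not_le.1 h).le

section InsertedWord

variable {n : ℕ} (σ : Equiv.Perm (Fin n))

theorem wordInf_of_lt {p : ℕ} (hp : n < p) : wordInf σ p = ⊤ :=
  dif_neg fun h ↦ hp.not_ge h.2

theorem insWordInf_add_one_self (i : ℕ) : insWordInf σ i (i + 1) = ((i + 1 : ℕ) : ℕ∞) := by
  rw [insWordInf, if_neg (lt_irrefl _), if_pos rfl]

theorem insWordInf_add_one_of_lt {i p : ℕ} (hp : i < p) :
    insWordInf σ i (p + 1) = shiftInf i (wordInf σ p) := by
  rw [insWordInf, if_neg (by omega), if_neg (by omega), Nat.add_sub_cancel]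

theorem insWordInf_descent_at_inserted_iff (i : ℕ) :
    insWordInf σ i (i + 1 + 1) < insWordInf σ i (i + 1) ↔ wordInf σ (i + 1) ≤ i := by
  rw [insWordInf_add_one_of_lt σ i.lt_succ_self, insWordInf_add_one_self, shiftInf_lt_add_one_iff]

end InsertedWord

theorem descents_right_of_inserted_fixed_point_general (n : ℕ) (σ : Equiv.Perm (Fin n))
    (i : ℕ) (hi : i ≤ n) :
    descentCount (insWordInf σ i) (i + 1) n =
      descentCount (wordInf σ) (i + 1) (n - 1) + if wordInf σ (i + 1) ≤ i then 1 else 0 := by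
  rcases hi.eq_or_lt with rfl | hlt
  · have hlast : ¬ wordInf σ (i + 1) ≤ i := by
      rw [wordInf_of_lt σ i.lt_succ_self]
      exact not_le.2 (ENat.natCast_lt_top i)
    rw [descentCount_of_lt _ (by omega), descentCount_of_lt _ (by omega), if_neg hlast]
  · have htail : descentCount (insWordInf σ i) (i + 1 + 1) n =
        descentCount (wordInf σ) (i + 1) (n - 1) := by
      rw [← descentCount_add_one_of_strictMono (shiftInf_strictMono i)
        fun p hp ↦ insWordInf_add_one_of_lt σ hp, Nat.sub_add_cancel (by omega)]
    simp only [descentCount_eq_add_ite _ hlt, htail, insWordInf_descent_at_inserted_iff]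

/-- Lemma on the number of descents to the right of an inserted fixed
point. Let `(i,i+1)` be the `j`-th slot of `σ ∈ S_n`, `t_i = des(x_{i+1}⋯x_n)` and `d_j`
the number of descent places of `⟨σ,j⟩` that are `≥ i+1`. Then `d_j = t_i` in the cases
`x_i > x_{i+1} > i`, `x_i < i < x_{i+1}`, `i < x_i < x_{i+1}`, and `d_j = t_i + 1` in the
cases `i > x_i > x_{i+1}`, `x_i > i ≥ x_{i+1}`, `x_i < x_{i+1} ≤ i`. -/
theorem descents_right_of_inserted_fixed_point (n : ℕ) (σ : Equiv.Perm (Fin n))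
    (i j : ℕ) (hi : i ≤ n)
    (hslot : wordInf σ i ≠ (i : ℕ∞) ∧
      ((Finset.univ.filter fun p : Fin n => σ p = p ∧ (p : ℕ) + 1 < i).card) + j = i) :
    (((i : ℕ∞) < wordInf σ (i+1) ∧ wordInf σ (i+1) < wordInf σ i) ∨
     (wordInf σ i < (i : ℕ∞) ∧ (i : ℕ∞) < wordInf σ (i+1)) ∨
     ((i : ℕ∞) < wordInf σ i ∧ wordInf σ i < wordInf σ (i+1)) →
      ((Finset.Icc (i+1) n).filter fun p => insWordInf σ i (p+1) < insWordInf σ i p).card =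
      ((Finset.Icc (i+1) (n-1)).filter fun p => wordInf σ (p+1) < wordInf σ p).card) ∧
    ((wordInf σ (i+1) < wordInf σ i ∧ wordInf σ i < (i : ℕ∞)) ∨
     ((i : ℕ∞) < wordInf σ i ∧ wordInf σ (i+1) ≤ (i : ℕ∞)) ∨
     (wordInf σ i < wordInf σ (i+1) ∧ wordInf σ (i+1) ≤ (i : ℕ∞)) →
      ((Finset.Icc (i+1) n).filter fun p => insWordInf σ i (p+1) < insWordInf σ i p).card =
      ((Finset.Icc (i+1) (n-1)).filter fun p => wordInf σ (p+1) < wordInf σ p).card + 1) := by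
  have hcount := descents_right_of_inserted_fixed_point_general n σ i hi
  simp only [descentCount] at hcount
  rw [hcount]
  refine ⟨fun h ↦ ?_, fun h ↦ ?_⟩
  · have hgt : (i : ℕ∞) < wordInf σ (i + 1) := by
      rcases h with h | h | h
      exacts [h.1, h.2, h.1.trans h.2]
    rw [if_neg hgt.not_ge, add_zero]
  · have hle : wordInf σ (i + 1) ≤ i := by
      rcases h with h | h | h
      exacts [(h.1.trans h.2).le, h.2, h.2]
    rw [if_pos hle]
end

section
/- Let w_1 and w_2 be nonempty words over the nonnegative integers with Last(w_1) > 0 and zero(w_2) = 0, set a = Last(w_1), b = First(w_2), ν = pil(w_1), t = des(w_2), and let μ = w_1 0^r w_2 with r ≥ 0, where μ lies in a shuffle class Sh(0^z v). Then, with I_w defined by F(w) = [Pos(w), I_w]: if zero(w_1) ≠ 0, then I_μ = (t^{[r]}, I_{w_1}+t+1) when a > b; I_μ = I_{w_1}+t when a < b and r = 0; and I_μ = (t^{[r−1]}, I_{w_1}+t+1, ν+t) when a < b and r > 0. If zero(w_1) = 0, then I_μ is the empty sequence when r = 0; I_μ = (t^{[r]}) when r > 0 and a > b; and I_μ = (t^{[r−1]},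 ν+t) when r > 0 and a < b. -/
/-!
Let `w` end in the pillar `a`. Appending a pillar `b` leaves the zeros of `F w` in place when
`a ≤ b`. When `b < a` it applies `δ`, which carries each zero over exactly one pillar, because
`F w` also ends in `a`, and so adds one to every entry of `I_w`. Hence appending a zero-free word
`s` adds `des(a s)` to every entry.

Appending `0^(k+1)` instead gives `F(w 0^(k+1)) = 0^k δ(F w) 0`: the first zero triggers `δ`, and
each further one triggers `γ`, which moves the previous final zero to the front. With `w = w₁`, the
first letter `b` of `w₂` then moves the remaining final zero to the front by `γ` if `b < a`, and
leaves it behind all the pillars of `w₁` if `a ≤ b`; the other letters of `w₂` add `des(w₂)` to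
every entry.
-/

/-! ### Words over the nonnegative integers: pillars, zeros, descents, and the coding
`w = [Pos(w), i_1, …, i_z]`. -/

/-- Number of descents of a word. -/
def desL : List ℕ → ℕ
  | a :: b :: t => (if b < a then 1 else 0) + desL (b :: t)
  | _ => 0

/-- The word of pillars (positive letters) of `w`, read from left to right. -/
def posW (w : List ℕ) : List ℕ := w.filter (fun x => x ≠ 0)

/-- Number of pillars. -/
def pil (w : List ℕ) : ℕ := (posW w).length

/-- Number of zeros. -/
def zeroCount (w : List ℕ) : ℕ := w.count 0

/-- `IseqAux p w`: the numbers of pillars to the left of each zero of `w`, reading left to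
right, `p` pillars having already been read. -/
def IseqAux : ℕ → List ℕ → List ℕ
  | _, [] => []
  | p, 0 :: t => p :: IseqAux p t
  | p, (x + 1) :: t => IseqAux (p + 1) t

/-- `Iseq w = (i_1, …, i_z)` where `i_k` is the number of pillars to the left of the `k`-th
zero of `w`; thus `w = [posW w, Iseq w]`. -/
def Iseq (w : List ℕ) : List ℕ := IseqAux 0 w

/-! ### Foata–Han's second transformation `F` -/

/-- `δ`: move each positive letter occurring just after a 0-factor to the beginning of
that 0-factor. -/
def deltaAux : ℕ → List ℕ → List ℕ
  | z, [] => List.replicate z 0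
  | z, 0 :: t => deltaAux (z + 1) t
  | z, (x + 1) :: t => (x + 1) :: (List.replicate z 0 ++ deltaAux 0 t)

def deltaFH (w : List ℕ) : List ℕ := deltaAux 0 w

/-- `γ`: add one letter `0` to the left and delete the rightmost letter (a `0`):
if `w = w''0` then `γ w = 0w''`. -/
def gammaFH (w : List ℕ) : List ℕ := 0 :: w.dropLast

/-- Foata–Han's second transformation `F = F₃` on words with nonnegative letters. -/
def FH (w : List ℕ) : List ℕ :=
  if h : w.length ≤ 1 ∨ desL w = 0 then w
  else
    let b := w.getLastD 0
    let u := w.dropLast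
    let r := (u.reverse.takeWhile (fun x => x == 0)).length
    let a := (u.reverse.dropWhile (fun x => x == 0)).headD 0
    if a ≤ b then FH u ++ [b]
    else if 1 ≤ r then gammaFH (FH u) ++ [b]
    else deltaFH (FH u) ++ [b]
termination_by w.length
decreasing_by all_goals
  (push_neg at h; simp only [u, List.length_dropLast]; omega)

/-! ### The coding of words by zero positions -/

lemma IseqAux_eq_map (p : ℕ) (w : List ℕ) : IseqAux p w = (Iseq w).map (· + p) := by
  suffices h : ∀ q, IseqAux (q + p) w = (IseqAux q w).map (· + p) by simpa [Iseq] using h 0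
  induction w with
  | nil => simp [IseqAux]
  | cons x w ih =>
    intro q
    cases x with
    | zero => simp [IseqAux, ih]
    | succ x => simp [IseqAux, ← ih, Nat.add_right_comm]

@[simp]
lemma Iseq_nil : Iseq [] = [] := rfl

@[simp]
lemma Iseq_zero_cons (w : List ℕ) : Iseq (0 :: w) = 0 :: Iseq w := rfl

@[simp]
lemma Iseq_succ_cons (x : ℕ) (w : List ℕ) : Iseq ((x + 1) :: w) = (Iseq w).map (· + 1) :=
  IseqAux_eq_map 1 w

lemma Iseq_append (u v : List ℕ) : Iseq (u ++ v) = Iseq u ++ (Iseq v).map (· + pil u) := by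
  induction u with
  | nil => simp [pil, posW]
  | cons x u ih => cases x <;> simp [ih, pil, posW, Function.comp_def, Nat.add_assoc]

@[simp]
lemma Iseq_replicate_zero_append (k : ℕ) (w : List ℕ) :
    Iseq (List.replicate k 0 ++ w) = List.replicate k 0 ++ Iseq w := by
  induction k with
  | zero => simp
  | succ k ih => simp [List.replicate_succ, ih]

lemma Iseq_concat_of_pos {b : ℕ} (hb : 0 < b) (w : List ℕ) : Iseq (w ++ [b]) = Iseq w := by
  obtain ⟨b, rfl⟩ := Nat.exists_eq_succ_of_ne_zero hb.ne'
  simp [Iseq_append]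

lemma length_Iseq (w : List ℕ) : (Iseq w).length = zeroCount w := by
  induction w with
  | nil => simp [zeroCount]
  | cons x w ih => cases x <;> simp [ih, zeroCount]

/-! ### The transformations `δ` and `γ` -/

lemma deltaAux_perm (z : ℕ) (w : List ℕ) : (deltaAux z w).Perm (List.replicate z 0 ++ w) := by
  induction w generalizing z with
  | nil => simp [deltaAux]
  | cons x w ih =>
    cases x with
    | zero => simpa [deltaAux, List.replicate_succ] using (ih (z + 1)).trans List.perm_middle.symm
    | succ x => exact (((ih 0).append_left _).cons _).trans List.perm_middle.symm

lemma deltaFH_perm (w : List ℕ) : (deltaFH w).Perm w := deltaAux_perm 0 w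

lemma gammaFH_concat (w : List ℕ) (x : ℕ) : gammaFH (w ++ [x]) = 0 :: w := by
  simp [gammaFH]

lemma gammaFH_perm {w : List ℕ} (hw : w.getLast? = some 0) : (gammaFH w).Perm w := by
  obtain ⟨w, rfl⟩ := List.getLast?_eq_some_iff.1 hw
  simpa [gammaFH_concat] using (List.perm_append_singleton 0 w).symm

/-- The `z` zeros already read wait for the next pillar; each zero jumps over exactly one pillar. -/
lemma Iseq_deltaAux (z : ℕ) {w : List ℕ} (hw : (List.replicate z 0 ++ w).getLast? ≠ some 0) :
    Iseq (deltaAux z w) = (Iseq (List.replicate z 0 ++ w)).map (· + 1) := by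
  induction w generalizing z with
  | nil => cases z <;> simp_all [deltaAux, List.replicate_succ']
  | cons x w ih =>
    cases x with
    | zero =>
      have hcons : List.replicate z 0 ++ 0 :: w = List.replicate (z + 1) 0 ++ w := by
        simp [List.replicate_succ']
      rw [hcons] at hw ⊢
      exact ih (z + 1) hw
    | succ x =>
      have hlast : w.getLast? ≠ some 0 := by
        contrapose! hw
        simp [List.getLast?_cons, hw]
      have hih : Iseq (deltaAux 0 w) = (Iseq w).map (· + 1) := ih 0 hlast
      simp [deltaAux, hih]

lemma Iseq_deltaFH {w : List ℕ} (hw : w.getLast? ≠ some 0) :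
    Iseq (deltaFH w) = (Iseq w).map (· + 1) :=
  Iseq_deltaAux 0 hw

/-! ### Last letter and rearrangement under `F` -/

lemma desL_eq_zero_iff_pairwise (w : List ℕ) : desL w = 0 ↔ w.Pairwise (· ≤ ·) := by
  rw [← List.isChain_iff_pairwise]
  induction w with
  | nil => simp [desL]
  | cons x w ih => cases w <;> simp_all [desL]

lemma FH_eq_self {w : List ℕ} (hw : desL w = 0) : FH w = w := by
  rw [FH, dif_pos (Or.inr hw)]

lemma getLast?_FH (w : List ℕ) : (FH w).getLast? = w.getLast? := by
  rcases List.eq_nil_or_concat' w with rfl | ⟨w, b, rfl⟩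
  · rw [FH_eq_self rfl]
  · rw [FH]
    simp only [List.getLastD_concat, List.dropLast_concat]
    split_ifs <;> simp only [List.getLast?_concat]

lemma FH_perm (w : List ℕ) : (FH w).Perm w := by
  induction w using List.reverseRecOn with
  | nil => rw [FH_eq_self rfl]
  | append_singleton u b ih =>
    rw [FH]
    simp only [List.getLastD_concat, List.dropLast_concat]
    split_ifs with _ _ hzeros
    · rfl
    · exact ih.append_right [b]
    · have hlast : u.getLast? = some 0 := by
        rcases List.eq_nil_or_concat' u with rfl | ⟨u, c, rfl⟩
        · simp at hzeros
        · by_contra hc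
          simp_all
      exact ((gammaFH_perm (getLast?_FH u ▸ hlast)).trans ih).append_right [b]
    · exact ((deltaFH_perm (FH u)).trans ih).append_right [b]

lemma Iseq_FH_eq_nil {w : List ℕ} (hw : zeroCount w = 0) : Iseq (FH w) = [] :=
  List.eq_nil_of_length_eq_zero <|
    (length_Iseq (FH w)).trans (((FH_perm w).count_eq 0).trans hw)

lemma pil_deltaFH_FH (w : List ℕ) : pil (deltaFH (FH w)) = pil w :=
  (((deltaFH_perm _).trans (FH_perm w)).filter _).length_eq

/-! ### Appending letters to a word with positive last letter -/

section LastPositive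

variable {w : List ℕ} {a : ℕ} (hw : w.getLast? = some a) (ha : 0 < a)
include hw ha

/-- A weakly increasing word `w 0^r b` falls under `a ≤ b`, where the base case of `FH` agrees. -/
lemma FH_append_zeros_concat (r b : ℕ) :
    FH (w ++ List.replicate r 0 ++ [b]) =
      if a ≤ b then FH (w ++ List.replicate r 0) ++ [b]
      else if 1 ≤ r then gammaFH (FH (w ++ List.replicate r 0)) ++ [b]
      else deltaFH (FH (w ++ List.replicate r 0)) ++ [b] := by
  obtain ⟨w, rfl⟩ := List.getLast?_eq_some_iff.1 hw
  set u := w ++ [a] ++ List.replicate r 0 with hu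
  have ha_mem : a ∈ u := by simp [hu]
  by_cases hdes : desL (u ++ [b]) = 0
  · obtain ⟨hu_sorted, -, hle⟩ :=
      List.pairwise_append.1 ((desL_eq_zero_iff_pairwise _).1 hdes)
    rw [if_pos (hle a ha_mem b (List.mem_singleton_self b)), FH_eq_self hdes,
      FH_eq_self ((desL_eq_zero_iff_pairwise _).2 hu_sorted)]
  · have hlength : ¬ (u ++ [b]).length ≤ 1 := by
      simp [List.ne_nil_of_mem ha_mem]
    have hreverse : u.reverse = List.replicate r 0 ++ a :: w.reverse := by simp [hu]
    have hzeros : (u.reverse.takeWhile (fun x => x == 0)).length = r := by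
      rw [hreverse, List.takeWhile_append_of_pos (by simp)]
      simp [ha.ne']
    have hpillar : (u.reverse.dropWhile (fun x => x == 0)).headD 0 = a := by
      rw [hreverse, List.dropWhile_append_of_pos (by simp)]
      simp [ha.ne']
    rw [FH, dif_neg (not_or.2 ⟨hlength, hdes⟩)]
    simp only [List.getLastD_concat, List.dropLast_concat, hzeros, hpillar]

lemma FH_concat_of_le {b : ℕ} (hab : a ≤ b) : FH (w ++ [b]) = FH w ++ [b] := by
  simpa [hab] using FH_append_zeros_concat hw ha 0 b

lemma FH_concat_of_lt {b : ℕ} (hba : b < a) : FH (w ++ [b]) = deltaFH (FH w) ++ [b] := by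
  simpa [hba.not_ge] using FH_append_zeros_concat hw ha 0 b

lemma FH_append_zeros (k : ℕ) :
    FH (w ++ List.replicate (k + 1) 0) = List.replicate k 0 ++ deltaFH (FH w) ++ [0] := by
  induction k with
  | zero => simpa using FH_concat_of_lt hw ha ha
  | succ k ih =>
    rw [List.replicate_succ', ← List.append_assoc, FH_append_zeros_concat hw ha,
      if_neg ha.not_ge, if_pos (Nat.le_add_left 1 k), ih, gammaFH_concat]
    simp [List.replicate_succ]

lemma FH_append_zeros_concat_of_lt (r : ℕ) {b : ℕ} (hba : b < a) :
    FH (w ++ List.replicate r 0 ++ [b]) = List.replicate r 0 ++ deltaFH (FH w) ++ [b] := by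
  cases r with
  | zero => simpa using FH_concat_of_lt hw ha hba
  | succ k =>
    rw [FH_append_zeros_concat hw ha, if_neg hba.not_ge, if_pos (Nat.le_add_left 1 k),
      FH_append_zeros hw ha, gammaFH_concat]
    simp [List.replicate_succ]

lemma FH_append_zeros_concat_of_le (k : ℕ) {b : ℕ} (hab : a ≤ b) :
    FH (w ++ List.replicate (k + 1) 0 ++ [b]) =
      List.replicate k 0 ++ deltaFH (FH w) ++ [0] ++ [b] := by
  rw [FH_append_zeros_concat hw ha, if_pos hab, FH_append_zeros hw ha]

lemma Iseq_deltaFH_FH : Iseq (deltaFH (FH w)) = (Iseq (FH w)).map (· + 1) :=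
  Iseq_deltaFH (by simp [getLast?_FH, hw, ha.ne'])

lemma Iseq_FH_append {s : List ℕ} (hs : ∀ x ∈ s, 0 < x) :
    Iseq (FH (w ++ s)) = (Iseq (FH w)).map (· + desL (a :: s)) := by
  induction s generalizing w a with
  | nil => simp [desL]
  | cons b s ih =>
    obtain ⟨hb, hs⟩ := List.forall_mem_cons.1 hs
    rw [List.append_cons, ih List.getLast?_concat hb hs]
    rcases le_or_gt a b with hab | hba
    · rw [FH_concat_of_le hw ha hab, Iseq_concat_of_pos hb]
      simp [desL, hab.not_gt]
    · rw [FH_concat_of_lt hw ha hba, Iseq_concat_of_pos hb, Iseq_deltaFH_FH hw ha]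
      simp [desL, hba]

lemma Iseq_FH_append_zeros_concat_of_lt (r : ℕ) {b : ℕ} (hb : 0 < b) (hba : b < a) :
    Iseq (FH (w ++ List.replicate r 0 ++ [b])) =
      List.replicate r 0 ++ (Iseq (FH w)).map (· + 1) := by
  rw [FH_append_zeros_concat_of_lt hw ha r hba, Iseq_concat_of_pos hb,
    Iseq_replicate_zero_append, Iseq_deltaFH_FH hw ha]

lemma Iseq_FH_append_zeros_concat_of_le (k : ℕ) {b : ℕ} (hab : a ≤ b) :
    Iseq (FH (w ++ List.replicate (k + 1) 0 ++ [b])) =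
      List.replicate k 0 ++ (Iseq (FH w)).map (· + 1) ++ [pil w] := by
  rw [FH_append_zeros_concat_of_le hw ha k hab, Iseq_concat_of_pos (ha.trans_le hab),
    List.append_assoc, Iseq_replicate_zero_append, Iseq_append, Iseq_deltaFH_FH hw ha,
    pil_deltaFH_FH]
  simp

end LastPositive

theorem FH_insertion_lemma_general (w₁ w₂ : List ℕ) (hw₂ : w₂ ≠ [])
    (ha : 0 < w₁.getLastD 0) (hz₂ : zeroCount w₂ = 0) (r : ℕ) :
    let μ := w₁ ++ List.replicate r 0 ++ w₂
    let a := w₁.getLastD 0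
    let b := w₂.headD 0
    let ν := pil w₁
    let t := desL w₂
    (b < a → Iseq (FH μ) = List.replicate r t ++ (Iseq (FH w₁)).map (· + t + 1)) ∧
    (a ≤ b → r = 0 → Iseq (FH μ) = (Iseq (FH w₁)).map (· + t)) ∧
    (a ≤ b → 0 < r →
        Iseq (FH μ) = List.replicate (r - 1) t ++
          (Iseq (FH w₁)).map (· + t + 1) ++ [ν + t]) := by
  obtain ⟨c, s, rfl⟩ := List.exists_cons_of_ne_nil hw₂
  intro μ a b ν t
  have hlast : w₁.getLast? = some a := by
    cases h : w₁.getLast? <;> simp_all [a]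
  have hpos : ∀ x ∈ b :: s, 0 < x := fun x hx =>
    Nat.pos_of_ne_zero (ne_of_mem_of_not_mem hx (List.count_eq_zero.1 hz₂))
  obtain ⟨hb, hs⟩ := List.forall_mem_cons.1 hpos
  have hshift :
      Iseq (FH μ) = (Iseq (FH (w₁ ++ List.replicate r 0 ++ [b]))).map (· + t) := by
    have hμ : μ = w₁ ++ List.replicate r 0 ++ [b] ++ s := List.append_cons _ _ _
    rw [hμ]
    exact Iseq_FH_append List.getLast?_concat hb hs
  refine ⟨fun hba => ?_, ?_, ?_⟩
  · rw [hshift, Iseq_FH_append_zeros_concat_of_lt hlast ha r hb hba]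
    simp [Nat.add_assoc, Nat.add_comm 1]
  · rintro hab rfl
    rw [hshift, List.replicate_zero, List.append_nil, FH_concat_of_le hlast ha hab,
      Iseq_concat_of_pos hb]
  · intro hab hr
    obtain ⟨k, rfl⟩ := Nat.exists_eq_succ_of_ne_zero hr.ne'
    rw [hshift, Iseq_FH_append_zeros_concat_of_le hlast ha k hab]
    simp [ν, Nat.add_assoc, Nat.add_comm 1]

/-- key lemma on `F`. Let `w₁, w₂` be nonempty words with
`Last(w₁) = a > 0`, `w₂` containing no zero, `b = First(w₂)`, `ν = pil(w₁)`,
`t = des(w₂)`, and `μ = w₁ 0^r w₂`. Writing `I_w = Iseq (F w)` (so that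
`F w = [Pos w, I_w]`), the sequence `I_μ` is given by the stated case analysis. -/
theorem FH_insertion_lemma (w₁ w₂ : List ℕ) (hw₁ : w₁ ≠ []) (hw₂ : w₂ ≠ [])
    (ha : 0 < w₁.getLastD 0) (hz₂ : zeroCount w₂ = 0) (r : ℕ) :
    let μ := w₁ ++ List.replicate r 0 ++ w₂
    let a := w₁.getLastD 0
    let b := w₂.headD 0
    let ν := pil w₁
    let t := desL w₂
    (zeroCount w₁ ≠ 0 → b < a →
        Iseq (FH μ) = List.replicate r t ++ (Iseq (FH w₁)).map (· + t + 1)) ∧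
    (zeroCount w₁ ≠ 0 → a < b → r = 0 →
        Iseq (FH μ) = (Iseq (FH w₁)).map (· + t)) ∧
    (zeroCount w₁ ≠ 0 → a < b → 0 < r →
        Iseq (FH μ) = List.replicate (r - 1) t ++
          (Iseq (FH w₁)).map (· + t + 1) ++ [ν + t]) ∧
    (zeroCount w₁ = 0 → r = 0 → Iseq (FH μ) = []) ∧
    (zeroCount w₁ = 0 → 0 < r → b < a → Iseq (FH μ) = List.replicate r t) ∧
    (zeroCount w₁ = 0 → 0 < r → a < b →
        Iseq (FH μ) = List.replicate (r - 1) t ++ [ν + t]) := by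
  have h := FH_insertion_lemma_general w₁ w₂ hw₂ ha hz₂ r
  have hnil := Iseq_FH_eq_nil (w := w₁)
  grind
end
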